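/- (Statistical error of the Euler–Maruyama integrator under global strong convexity, strong order p = 1, q = 1.) Assume A1, A2' and A3. Consider the Euler–Maruyama chain (X_n,V_n) with time step h and damping rate γ, started from initial data with E(|X₀|+|V₀|+1)⁴ < ∞. There exists γ₀ > 0 such that whenever γ ≥ γ₀, there exist constants C, h₀ > 0 depending on γ such that for every 0 < h ≤ h₀ and every integer N ≥ 1: E[((1/N)·Σ_{n=0}^{N−1} f(X_n,V_n) − π(f))²] ≤ C·(h² + 1/(Nh))·E(|X₀|+|V₀|+1)⁴. -/

import Mathlib

open MeasureTheory ProbabilityTheory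
open scoped ENNReal

/-!
In the coordinates `(x, x + (2 / γ) v)` an Euler–Maruyama step contracts distances at a rate of
order `h` once `γ` is large, so the expected remaining sum `Fₙ z = 𝔼_z[f Z₀ + ⋯ + f Zₙ₋₁]` is
Lipschitz with constant `O(1 / h)`. Trading the actual remaining sum for its conditional
expectation, one step at a time, costs a martingale increment of variance `O(h · h⁻²)` per step;
after division by `N²` this is the term `1 / (N h)`.

The bias is governed by `∫ Fₙ dπ`, and hence by how much one step changes `π`-integrals of
`L`-Lipschitz functions. That change is `L · O(h²)`: up to a displacement `O(h²)` the step is a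
drift, a kick and a partial velocity refreshment, where the refreshment preserves `π` and the other
two preserve volume and together change the energy by `O(h²)` only. With `L = O(1 / h)` the bias per
step is `O(h)`, whose square is the term `h²`.
-/

open scoped NNReal

section ContractiveIteration

variable {S W : Type*} [PseudoMetricSpace S] [MeasurableSpace W]
  {φ : S → W → S} {ν : Measure W} {κ s L ε : ℝ≥0} {F f : S → ℝ}

lemma lintegral_enorm_const_add_sq_le [IsProbabilityMeasure ν] {X : W → ℝ} (hX : MemLp X 2 ν)
    (a b : ℝ) :
    ∫⁻ w, ‖a + X w‖ₑ ^ 2 ∂ν ≤ ‖a + ∫ w, X w ∂ν‖ₑ ^ 2 + ∫⁻ w, ‖X w - b‖ₑ ^ 2 ∂ν := by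
  have integral_sq {Y : W → ℝ} (hY : MemLp Y 2 ν) :
      ∫⁻ w, ‖Y w‖ₑ ^ 2 ∂ν = ENNReal.ofReal (∫ w, Y w ^ 2 ∂ν) := by
    rw [ofReal_integral_eq_lintegral_ofReal hY.integrable_sq (ae_of_all _ fun _ => sq_nonneg _)]
    exact lintegral_congr fun w => by rw [Real.enorm_eq_ofReal_abs, ← ENNReal.ofReal_pow
      (abs_nonneg _), sq_abs]
  have hadd : MemLp (fun w => a + X w) 2 ν := (memLp_const a).add hX
  have hsub : MemLp (fun w => X w - b) 2 ν := hX.sub (memLp_const b)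
  have var_add := variance_eq_sub hadd
  have var_sub := variance_le_expectation_sq hsub.aestronglyMeasurable
  rw [variance_const_add hX.aestronglyMeasurable,
    integral_add (integrable_const a) (hX.integrable one_le_two)] at var_add
  rw [variance_sub_const hX.aestronglyMeasurable] at var_sub
  simp only [Pi.pow_apply, integral_const, probReal_univ, one_smul] at var_add var_sub
  rw [integral_sq hadd, integral_sq hsub, Real.enorm_eq_ofReal_abs,
    ← ENNReal.ofReal_pow (abs_nonneg _), sq_abs, ← ENNReal.ofReal_add (sq_nonneg _)
    (integral_nonneg fun _ => sq_nonneg _)]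
  exact ENNReal.ofReal_le_ofReal (by linarith)

lemma ennreal_add_sq_le (a b : ℝ≥0∞) : (a + b) ^ 2 ≤ 2 * (a ^ 2 + b ^ 2) := by
  have h := ENNReal.rpow_add_le_mul_rpow_add_rpow a b one_le_two
  norm_num at h
  exact h

lemma geom_sum_one_sub_le_inv (hκ0 : 0 < κ) (hκ1 : κ ≤ 1) (n : ℕ) :
    ∑ k ∈ Finset.range n, (1 - κ) ^ k ≤ κ⁻¹ := by
  rw [geom_sum_of_lt_one (tsub_lt_self one_pos hκ0), tsub_tsub_cancel_of_le hκ1, ← one_div]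
  gcongr
  exact tsub_le_self

lemma geom_sum_one_sub_le_natCast (n : ℕ) : ∑ k ∈ Finset.range n, (1 - κ) ^ k ≤ n :=
  (Finset.sum_le_card_nsmul _ _ 1 fun _ _ => pow_le_one₀ zero_le tsub_le_self).trans (by simp)

variable (φ ν) in
/-- One step of the random iteration `z ↦ φ z w`, averaged over the noise `w ∼ ν`. -/
noncomputable def markovOp (F : S → ℝ) (z : S) : ℝ := ∫ w, F (φ z w) ∂ν

variable (φ ν) in
/-- The expectation of `f Z₀ + ⋯ + f Zₙ₋₁` along the random iteration started from `Z₀ = z`. -/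
noncomputable def expectedSum (f : S → ℝ) : ℕ → S → ℝ
  | 0, _ => 0
  | n + 1, z => f z + markovOp φ ν (expectedSum f n) z

lemma abs_markovOp_sub_le [IsProbabilityMeasure ν] {ψ : S → W → S} {z z' : S} {r : ℝ}
    (hφ : Integrable (fun w => F (φ z w)) ν) (hψ : Integrable (fun w => F (ψ z' w)) ν)
    (hF : LipschitzWith L F) (hr : ∀ w, dist (φ z w) (ψ z' w) ≤ r) :
    |markovOp φ ν F z - markovOp ψ ν F z'| ≤ L * r := by
  rw [markovOp, markovOp, ← integral_sub hφ hψ, ← Real.norm_eq_abs]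
  refine (norm_integral_le_of_norm_le_const (C := L * r) (ae_of_all _ fun w => ?_)).trans (by simp)
  exact (hF.dist_le_mul _ _).trans (by gcongr; exact hr w)

lemma lipschitzWith_markovOp [IsProbabilityMeasure ν] {c : ℝ≥0}
    (hφ : ∀ w, LipschitzWith c (φ · w)) (hint : ∀ z, Integrable (fun w => F (φ z w)) ν)
    (hF : LipschitzWith L F) : LipschitzWith (L * c) (markovOp φ ν F) := by
  refine LipschitzWith.of_dist_le_mul fun z z' => ?_
  rw [NNReal.coe_mul, mul_assoc]
  exact abs_markovOp_sub_le (hint z) (hint z') hF fun w => (hφ w).dist_le_mul z z'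

variable [MeasurableSpace S]

variable (φ ν κ s) in
/-- The maps `φ · w` contract distances by the factor `1 - κ`, and one step started from a
deterministic point has mean square deviation at most `s`. -/
structure IsContractiveIteration : Prop where
  pos : 0 < κ
  le_one : κ ≤ 1
  measurable : Measurable (Function.uncurry φ)
  lipschitz : ∀ w, LipschitzWith (1 - κ) (φ · w)
  spread : ∀ z, ∃ c, ∫⁻ w, edist (φ z w) c ^ 2 ∂ν ≤ s

variable (φ ν ε) in
/-- The measures `π` and `π P`, where `P = markovOp φ ν`, are at Wasserstein-1 distance at most
`ε`, in the dual formulation. -/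
def IsAlmostInvariant (π : Measure S) : Prop :=
  ∀ ⦃L : ℝ≥0⦄ ⦃F : S → ℝ⦄, LipschitzWith L F →
    |∫ z, markovOp φ ν F z ∂π - ∫ z, F z ∂π| ≤ L * ε

lemma integrable_of_lipschitzWith [OpensMeasurableSpace S] {π : Measure S}
    [IsFiniteMeasure π] (hF : LipschitzWith L F) {z : S} (hπ : Integrable (dist z) π) :
    Integrable F π := by
  refine ((integrable_const ‖F z‖).add (hπ.const_mul L)).mono'
    hF.continuous.measurable.aestronglyMeasurable (ae_of_all _ fun y => ?_)
  have hy : ‖F y - F z‖ ≤ L * dist z y := by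
    simpa [dist_comm z y, Real.dist_eq] using hF.dist_le_mul y z
  simp only [Pi.add_apply]
  linarith [norm_le_norm_add_norm_sub (F z) (F y), norm_sub_rev (F z) (F y)]

namespace IsContractiveIteration

lemma lintegral_enorm_sub_sq_le (hφ : IsContractiveIteration φ ν κ s)
    (hF : LipschitzWith L F) (z : S) :
    ∃ b, ∫⁻ w, ‖F (φ z w) - b‖ₑ ^ 2 ∂ν ≤ L ^ 2 * s := by
  obtain ⟨c, hc⟩ := hφ.spread z
  refine ⟨F c, ?_⟩
  calc ∫⁻ w, ‖F (φ z w) - F c‖ₑ ^ 2 ∂ν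
      ≤ ∫⁻ w, L ^ 2 * edist (φ z w) c ^ 2 ∂ν := lintegral_mono fun w => by
        rw [← mul_pow, ← edist_eq_enorm_sub]
        exact pow_le_pow_left' (hF (φ z w) c) 2
    _ = L ^ 2 * ∫⁻ w, edist (φ z w) c ^ 2 ∂ν := lintegral_const_mul' _ _ (by finiteness)
    _ ≤ L ^ 2 * s := by gcongr

variable [OpensMeasurableSpace S] [IsProbabilityMeasure ν] (hφ : IsContractiveIteration φ ν κ s)
include hφ

lemma memLp_comp (hF : LipschitzWith L F) (z : S) : MemLp (fun w => F (φ z w)) 2 ν := by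
  obtain ⟨b, hb⟩ := hφ.lintegral_enorm_sub_sq_le hF z
  have hmeas : AEStronglyMeasurable (fun w => F (φ z w)) ν :=
    (hF.continuous.measurable.comp (hφ.measurable.comp measurable_prodMk_left)).aestronglyMeasurable
  have hsub : MemLp (fun w => F (φ z w) - b) 2 ν := by
    refine ⟨hmeas.sub aestronglyMeasurable_const, ?_⟩
    rw [eLpNorm_lt_top_iff_lintegral_rpow_enorm_lt_top two_ne_zero ENNReal.ofNat_ne_top]
    simpa using hb.trans_lt (by finiteness)
  exact (hsub.add (memLp_const b)).congr_norm hmeas (ae_of_all _ fun w => by simp)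

lemma lintegral_enorm_const_add_sq_le (hF : LipschitzWith L F) (z : S) (a : ℝ) :
    ∫⁻ w, ‖a + F (φ z w)‖ₑ ^ 2 ∂ν ≤ ‖a + markovOp φ ν F z‖ₑ ^ 2 + L ^ 2 * s := by
  obtain ⟨b, hb⟩ := hφ.lintegral_enorm_sub_sq_le hF z
  exact (_root_.lintegral_enorm_const_add_sq_le (hφ.memLp_comp hF z) a b).trans (by gcongr; rfl)

lemma lipschitzWith_markovOp (hF : LipschitzWith L F) :
    LipschitzWith (L * (1 - κ)) (markovOp φ ν F) :=
  _root_.lipschitzWith_markovOp hφ.lipschitz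
    (fun z => (hφ.memLp_comp hF z).integrable one_le_two) hF

lemma lipschitzWith_expectedSum (hf : LipschitzWith L f) (n : ℕ) :
    LipschitzWith (L * ∑ k ∈ Finset.range n, (1 - κ) ^ k) (expectedSum φ ν f n) := by
  induction n with
  | zero =>
    simp only [Finset.range_zero, Finset.sum_empty, mul_zero]
    exact LipschitzWith.const (0 : ℝ)
  | succ n ih =>
    refine (hf.add (hφ.lipschitzWith_markovOp ih)).weaken (le_of_eq ?_)
    rw [geom_sum_succ]
    ring

variable {π : Measure S} [IsProbabilityMeasure π] (hπ : ∀ z, Integrable (dist z) π)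
  (hinv : IsAlmostInvariant φ ν ε π)
include hπ hinv

lemma abs_integral_expectedSum_le (hf : LipschitzWith L f) (hf0 : ∫ z, f z ∂π = 0) (n : ℕ) :
    |∫ z, expectedSum φ ν f n z ∂π| ≤ n * (L * κ⁻¹ * ε) := by
  induction n with
  | zero => simp [expectedSum]
  | succ n ih =>
    obtain ⟨z⟩ := π.nonempty_of_neZero
    have hn := hφ.lipschitzWith_expectedSum hf n
    have hsum : ∫ z, expectedSum φ ν f (n + 1) z ∂π
        = ∫ z, markovOp φ ν (expectedSum φ ν f n) z ∂π := by
      simp only [expectedSum]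
      rw [integral_add (integrable_of_lipschitzWith hf (hπ z))
        (integrable_of_lipschitzWith (hφ.lipschitzWith_markovOp hn) (hπ z)), hf0, zero_add]
    have hdefect := hinv (hn.weaken
      (mul_le_mul_right (geom_sum_one_sub_le_inv hφ.pos hφ.le_one n) L))
    rw [hsum]
    push_cast at hdefect ih ⊢
    linarith [abs_sub_abs_le_abs_sub (∫ z, markovOp φ ν (expectedSum φ ν f n) z ∂π)
      (∫ z, expectedSum φ ν f n z ∂π)]

lemma enorm_expectedSum_le (hf : LipschitzWith L f) (hf0 : ∫ z, f z ∂π = 0) (n : ℕ) (z : S) :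
    ‖expectedSum φ ν f n z‖ₑ ≤ (L * ∑ k ∈ Finset.range n, (1 - κ) ^ k : ℝ≥0) *
      ∫⁻ y, edist z y ∂π + (n * (L * κ⁻¹ * ε) : ℝ≥0) := by
  have hn := hφ.lipschitzWith_expectedSum hf n
  have hmean : ‖∫ y, expectedSum φ ν f n y ∂π‖ₑ ≤ (n * (L * κ⁻¹ * ε) : ℝ≥0) := by
    rw [← ofReal_norm, ENNReal.ofReal_le_iff_le_toReal ENNReal.coe_ne_top]
    simpa using hφ.abs_integral_expectedSum_le hπ hinv hf hf0 n
  have hdev : ‖expectedSum φ ν f n z - ∫ y, expectedSum φ ν f n y ∂π‖ₑ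
      ≤ (L * ∑ k ∈ Finset.range n, (1 - κ) ^ k : ℝ≥0) * ∫⁻ y, edist z y ∂π := by
    calc ‖expectedSum φ ν f n z - ∫ y, expectedSum φ ν f n y ∂π‖ₑ
        = ‖∫ y, (expectedSum φ ν f n z - expectedSum φ ν f n y) ∂π‖ₑ := by
          rw [integral_sub (integrable_const _) (integrable_of_lipschitzWith hn (hπ z))]
          simp
      _ ≤ ∫⁻ y, ‖expectedSum φ ν f n z - expectedSum φ ν f n y‖ₑ ∂π :=
          enorm_integral_le_lintegral_enorm _
      _ ≤ ∫⁻ y, (L * ∑ k ∈ Finset.range n, (1 - κ) ^ k : ℝ≥0) * edist z y ∂π :=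
          lintegral_mono fun y => (edist_eq_enorm_sub _ _).symm.trans_le (hn z y)
      _ = _ := lintegral_const_mul' _ _ ENNReal.coe_ne_top
  calc ‖expectedSum φ ν f n z‖ₑ
      = ‖(expectedSum φ ν f n z - ∫ y, expectedSum φ ν f n y ∂π)
          + ∫ y, expectedSum φ ν f n y ∂π‖ₑ := by rw [sub_add_cancel]
    _ ≤ _ := (enorm_add_le _ _).trans (add_le_add hdev hmean)

lemma enorm_expectedSum_sq_le (hf : LipschitzWith L f) (hf0 : ∫ z, f z ∂π = 0) (n : ℕ) (z : S) :
    ‖expectedSum φ ν f n z‖ₑ ^ 2 ≤ (2 * (L ^ 2 * (n * κ⁻¹)) : ℝ≥0) * (∫⁻ y, edist z y ∂π) ^ 2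
      + (2 * (n * (L * κ⁻¹ * ε)) ^ 2 : ℝ≥0) := by
  set K : ℝ≥0 := ∑ k ∈ Finset.range n, (1 - κ) ^ k
  have hK : (L * K) ^ 2 ≤ L ^ 2 * (n * κ⁻¹) := by
    rw [mul_pow, sq K]
    gcongr
    exacts [geom_sum_one_sub_le_natCast n, geom_sum_one_sub_le_inv hφ.pos hφ.le_one n]
  calc ‖expectedSum φ ν f n z‖ₑ ^ 2
      ≤ ((L * K : ℝ≥0) * ∫⁻ y, edist z y ∂π + (n * (L * κ⁻¹ * ε) : ℝ≥0)) ^ 2 := by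
        gcongr
        exact hφ.enorm_expectedSum_le hπ hinv hf hf0 n z
    _ ≤ 2 * (((L * K : ℝ≥0) * ∫⁻ y, edist z y ∂π) ^ 2 + (n * (L * κ⁻¹ * ε) : ℝ≥0) ^ 2) :=
        ennreal_add_sq_le _ _
    _ = (2 * (L * K) ^ 2 : ℝ≥0) * (∫⁻ y, edist z y ∂π) ^ 2
          + (2 * (n * (L * κ⁻¹ * ε)) ^ 2 : ℝ≥0) := by
        push_cast
        ring
    _ ≤ _ := by gcongr

end IsContractiveIteration

end ContractiveIteration

section RandomIteration

variable {S W Ω : Type*} [MeasurableSpace S] [MeasurableSpace W] {φ : S → W → S} {ν : Measure W}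
  [mΩ : MeasurableSpace Ω] {ℱ : Filtration ℕ mΩ} {Z : ℕ → Ω → S} {ξ : ℕ → Ω → W}
  {P : Measure Ω}

variable (φ ν ℱ Z ξ P) in
/-- `Z` is an `ℱ`-adapted random iteration `Zₙ₊₁ = φ Zₙ ξₙ`, where `ξₙ ∼ ν` is independent of
`ℱ n`. -/
structure IsRandomIteration : Prop where
  adapted : ∀ n, Measurable[ℱ n] (Z n)
  measurable_noise : ∀ n, Measurable (ξ n)
  map_noise : ∀ n, P.map (ξ n) = ν
  indep_noise : ∀ n, Indep (ℱ n) (MeasurableSpace.comap (ξ n) inferInstance) P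
  step : ∀ n ω, Z (n + 1) ω = φ (Z n ω) (ξ n ω)

namespace IsRandomIteration

lemma of_iIndep (hφ : Measurable (Function.uncurry φ)) (hZ0 : Measurable (Z 0))
    (hξ : ∀ n, Measurable (ξ n)) (hν : ∀ n, P.map (ξ n) = ν)
    (hindep : iIndep (fun i : Option ℕ => i.elim (MeasurableSpace.comap (Z 0) inferInstance)
      fun n => MeasurableSpace.comap (ξ n) inferInstance) P)
    (hstep : ∀ n ω, Z (n + 1) ω = φ (Z n ω) (ξ n ω)) :
    ∃ ℱ : Filtration ℕ mΩ, IsRandomIteration φ ν ℱ Z ξ P := by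
  set σ : Option ℕ → MeasurableSpace Ω := fun i =>
    i.elim (MeasurableSpace.comap (Z 0) inferInstance)
      fun n => MeasurableSpace.comap (ξ n) inferInstance
  have hσ : ∀ i, σ i ≤ mΩ := by
    rintro (_ | n)
    exacts [hZ0.comap_le, (hξ n).comap_le]
  let past (n : ℕ) : Set (Option ℕ) := {i | ∀ k ∈ i, k < n}
  have past_mono : Monotone past := fun _ _ hnm _ hi k hk => (hi k hk).trans_le hnm
  let ℱ : Filtration ℕ mΩ :=
    { seq := fun n => ⨆ i ∈ past n, σ i
      mono' := fun _ _ hnm => biSup_mono (past_mono hnm)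
      le' := fun _ => iSup₂_le fun i _ => hσ i }
  refine ⟨ℱ, fun n => ?_, hξ, hν, fun n => ?_, hstep⟩
  · induction n with
    | zero =>
      exact (comap_measurable (Z 0)).mono (le_iSup₂_of_le (f := fun i _ => σ i) none
        (by simp [past]) le_rfl) le_rfl
    | succ n ih =>
      have hξn : Measurable[ℱ (n + 1)] (ξ n) :=
        (comap_measurable (ξ n)).mono (le_iSup₂_of_le (f := fun i _ => σ i) (some n)
          (by simp [past]) le_rfl) le_rfl
      rw [funext (hstep n)]
      exact hφ.comp ((ih.mono (ℱ.mono n.le_succ) le_rfl).prodMk hξn)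
  · have hdisj : Disjoint (past n) {some n} := by simp [past]
    exact indep_of_indep_of_le_right (indep_iSup_of_disjoint hσ hindep hdisj)
      (le_iSup₂_of_le (f := fun i _ => σ i) (some n) rfl le_rfl)

lemma comp {T : Type*} [MeasurableSpace T] {ψ : T → W → T} (hZ : IsRandomIteration φ ν ℱ Z ξ P)
    {e : S → T} (he : Measurable e) (hψ : ∀ z w, e (φ z w) = ψ (e z) w) :
    IsRandomIteration ψ ν ℱ (fun n ω => e (Z n ω)) ξ P where
  adapted n := he.comp (hZ.adapted n)
  measurable_noise := hZ.measurable_noise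
  map_noise := hZ.map_noise
  indep_noise := hZ.indep_noise
  step n ω := by rw [hZ.step, hψ]

lemma lintegral_noise [IsProbabilityMeasure P] {δ : Type*} [MeasurableSpace δ]
    (hZ : IsRandomIteration φ ν ℱ Z ξ P) {n : ℕ}
    {Y : Ω → δ} (hY : Measurable[ℱ n] Y) {G : δ × W → ℝ≥0∞} (hG : Measurable G) :
    ∫⁻ ω, G (Y ω, ξ n ω) ∂P = ∫⁻ ω, ∫⁻ w, G (Y ω, w) ∂ν ∂P := by
  have hYm : Measurable Y := hY.mono (ℱ.le n) le_rfl
  have hξ := hZ.measurable_noise n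
  have : IsProbabilityMeasure ν := hZ.map_noise n ▸ Measure.isProbabilityMeasure_map hξ.aemeasurable
  have hindep : IndepFun Y (ξ n) P := (IndepFun_iff_Indep _ _ _).2
    (indep_of_indep_of_le_left (hZ.indep_noise n) hY.comap_le)
  rw [← lintegral_map hG (hYm.prodMk hξ),
    (indepFun_iff_map_prod_eq_prod_map_map hYm.aemeasurable hξ.aemeasurable).1 hindep,
    hZ.map_noise, lintegral_prod _ hG.aemeasurable, lintegral_map hG.lintegral_prod_right' hYm]

variable [PseudoMetricSpace S] [OpensMeasurableSpace S] [IsProbabilityMeasure ν]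
  [IsProbabilityMeasure P] {κ s L ε : ℝ≥0} {f : S → ℝ}

/- Replacing the remaining sum by its conditional expectation makes the partial sums a martingale,
and each increment is the centred fluctuation of a Lipschitz function over one step. -/
lemma lintegral_enorm_add_sum_sq_le (hZ : IsRandomIteration φ ν ℱ Z ξ P)
    (hφ : IsContractiveIteration φ ν κ s) (hf : LipschitzWith L f) (j n : ℕ) {A : Ω → ℝ}
    (hA : Measurable[ℱ n] A) :
    ∫⁻ ω, ‖A ω + ∑ i ∈ Finset.range j, f (Z (n + i) ω)‖ₑ ^ 2 ∂P ≤
      ∫⁻ ω, ‖A ω + expectedSum φ ν f j (Z n ω)‖ₑ ^ 2 ∂P + (j * ((L * κ⁻¹) ^ 2 * s) : ℝ≥0) := by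
  induction j generalizing n A with
  | zero => simp [expectedSum]
  | succ j ih =>
    have hfm := hf.continuous.measurable
    have hAf : Measurable[ℱ n] fun ω => A ω + f (Z n ω) := hA.add (hfm.comp (hZ.adapted n))
    have hsum_lip : LipschitzWith (L * κ⁻¹) (expectedSum φ ν f j) :=
      (hφ.lipschitzWith_expectedSum hf j).weaken
        (mul_le_mul_right (geom_sum_one_sub_le_inv hφ.pos hφ.le_one j) L)
    have hG : Measurable fun p : (ℝ × S) × W =>
        ‖p.1.1 + expectedSum φ ν f j (φ p.1.2 p.2)‖ₑ ^ 2 :=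
      ((measurable_fst.fst.add (hsum_lip.continuous.measurable.comp (hφ.measurable.comp
        (measurable_fst.snd.prodMk measurable_snd)))).enorm).pow_const 2
    calc ∫⁻ ω, ‖A ω + ∑ i ∈ Finset.range (j + 1), f (Z (n + i) ω)‖ₑ ^ 2 ∂P
        = ∫⁻ ω, ‖A ω + f (Z n ω) + ∑ i ∈ Finset.range j, f (Z (n + 1 + i) ω)‖ₑ ^ 2 ∂P := by
          refine lintegral_congr fun ω => ?_
          rw [Finset.sum_range_succ', add_zero, add_assoc, add_comm (f _)]
          simp only [add_assoc, add_comm 1]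
      _ ≤ ∫⁻ ω, ‖A ω + f (Z n ω) + expectedSum φ ν f j (φ (Z n ω) (ξ n ω))‖ₑ ^ 2 ∂P
            + (j * ((L * κ⁻¹) ^ 2 * s) : ℝ≥0) := by
          simpa only [hZ.step] using ih (n + 1) (hAf.mono (ℱ.mono n.le_succ) le_rfl)
      _ = ∫⁻ ω, ∫⁻ w, ‖A ω + f (Z n ω) + expectedSum φ ν f j (φ (Z n ω) w)‖ₑ ^ 2 ∂ν ∂P
            + (j * ((L * κ⁻¹) ^ 2 * s) : ℝ≥0) := by
          rw [hZ.lintegral_noise (hAf.prodMk (hZ.adapted n)) hG]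
      _ ≤ ∫⁻ ω, (‖A ω + expectedSum φ ν f (j + 1) (Z n ω)‖ₑ ^ 2 + ((L * κ⁻¹) ^ 2 * s : ℝ≥0)) ∂P
            + (j * ((L * κ⁻¹) ^ 2 * s) : ℝ≥0) := by
          gcongr with ω
          simpa [expectedSum, add_assoc] using
            hφ.lintegral_enorm_const_add_sq_le hsum_lip (Z n ω) (A ω + f (Z n ω))
      _ = _ := by
          rw [lintegral_add_right _ measurable_const, lintegral_const, measure_univ, mul_one]
          push_cast
          ring

theorem lintegral_enorm_average_sub_sq_le {π : Measure S} [IsProbabilityMeasure π]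
    (hZ : IsRandomIteration φ ν ℱ Z ξ P) (hφ : IsContractiveIteration φ ν κ s)
    (hπ : ∀ z, Integrable (dist z) π) (hinv : IsAlmostInvariant φ ν ε π) (hf : LipschitzWith L f)
    {N : ℕ} (hN : 1 ≤ N) :
    ∫⁻ ω, ‖(N : ℝ)⁻¹ * ∑ n ∈ Finset.range N, f (Z n ω) - ∫ z, f z ∂π‖ₑ ^ 2 ∂P ≤
      L ^ 2 * ((2 / (N * κ) : ℝ≥0) * ∫⁻ ω, (∫⁻ z, edist (Z 0 ω) z ∂π) ^ 2 ∂P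
        + (2 * (ε / κ) ^ 2 + s / (N * κ ^ 2) : ℝ≥0)) := by
  set p := ∫ z, f z ∂π
  obtain ⟨z₀⟩ := π.nonempty_of_neZero
  have hN0 : (N : ℝ≥0) ≠ 0 := by positivity
  have hκ0 : κ ≠ 0 := hφ.pos.ne'
  have hf_sub : LipschitzWith L fun z => f z - p := by simpa using hf.sub (LipschitzWith.const p)
  have hf_sub0 : ∫ z, (f z - p) ∂π = 0 := by
    simp [integral_sub (integrable_of_lipschitzWith hf (hπ z₀)) (integrable_const p), p]
  have hmartingale := hZ.lintegral_enorm_add_sum_sq_le hφ hf_sub N 0 (A := 0) measurable_const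
  simp only [Pi.zero_apply, zero_add] at hmartingale
  calc ∫⁻ ω, ‖(N : ℝ)⁻¹ * ∑ n ∈ Finset.range N, f (Z n ω) - p‖ₑ ^ 2 ∂P
      = ((N : ℝ≥0)⁻¹ ^ 2 : ℝ≥0) *
          ∫⁻ ω, ‖∑ n ∈ Finset.range N, (f (Z n ω) - p)‖ₑ ^ 2 ∂P := by
        rw [← lintegral_const_mul' _ _ ENNReal.coe_ne_top]
        refine lintegral_congr fun ω => ?_
        have hcentre : (N : ℝ)⁻¹ * ∑ n ∈ Finset.range N, f (Z n ω) - p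
            = (N : ℝ)⁻¹ * ∑ n ∈ Finset.range N, (f (Z n ω) - p) := by
          have : (N : ℝ) ≠ 0 := by positivity
          rw [Finset.sum_sub_distrib]
          simp [mul_sub, this]
        have hinv_enorm : ‖(N : ℝ)⁻¹‖ₑ = ((N : ℝ≥0)⁻¹ : ℝ≥0) := by
          rw [enorm_eq_nnnorm, nnnorm_inv, Real.nnnorm_natCast]
        rw [hcentre, enorm_mul, mul_pow, hinv_enorm, ENNReal.coe_pow]
    _ ≤ ((N : ℝ≥0)⁻¹ ^ 2 : ℝ≥0) * (∫⁻ ω, ((2 * (L ^ 2 * (N * κ⁻¹)) : ℝ≥0) *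
          (∫⁻ z, edist (Z 0 ω) z ∂π) ^ 2 + (2 * (N * (L * κ⁻¹ * ε)) ^ 2 : ℝ≥0)) ∂P
            + (N * ((L * κ⁻¹) ^ 2 * s) : ℝ≥0)) := by
        refine mul_le_mul_right (hmartingale.trans (add_le_add_left
          (lintegral_mono fun ω => ?_) _)) _
        exact hφ.enorm_expectedSum_sq_le hπ hinv hf_sub hf_sub0 N (Z 0 ω)
    _ = _ := by
        have hleft : (N : ℝ≥0)⁻¹ ^ 2 * (2 * (L ^ 2 * (N * κ⁻¹))) = L ^ 2 * (2 / (N * κ)) := by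
          field_simp
        have hright : (N : ℝ≥0)⁻¹ ^ 2 * ((2 * (N * (L * κ⁻¹ * ε)) ^ 2) + N * ((L * κ⁻¹) ^ 2 * s))
            = L ^ 2 * (2 * (ε / κ) ^ 2 + s / (N * κ ^ 2)) := by
          field_simp
        rw [lintegral_add_right _ measurable_const, lintegral_const_mul' _ _ ENNReal.coe_ne_top,
          lintegral_const, measure_univ, mul_one, add_assoc, ← ENNReal.coe_add, mul_add,
          ← mul_assoc, ← ENNReal.coe_mul, ← ENNReal.coe_mul, hleft, hright, ENNReal.coe_mul,
          ENNReal.coe_mul, ENNReal.coe_pow, mul_add, mul_assoc]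

end IsRandomIteration

end RandomIteration

section Contraction

variable {E : Type*} [NormedAddCommGroup E] [InnerProductSpace ℝ E]

/-- One Euler–Maruyama step of size `h` for `dx = v dt`, `dv = -g(x) dt - γ v dt + √(2γ) dB`, driven
by the standardized noise `w`. -/
noncomputable def emStep (g : E → E) (h γ : ℝ) (z : E × E) (w : E) : E × E :=
  (z.1 + h • z.2, z.2 - h • g z.1 - (γ * h) • z.2 + √(2 * γ * h) • w)

/-- Strong monotonicity with constant `m`; the gradient of an `m`-strongly convex function has this
property. -/
def IsStronglyMonotone (m : ℝ) (g : E → E) : Prop :=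
  ∀ x y, m * ‖x - y‖ ^ 2 ≤ inner ℝ (g x - g y) (x - y)

/-- The coordinates `(x, x + (2 / γ) v)` on phase space, with the Euclidean norm of the product. In
this norm an Euler–Maruyama step is a contraction when `γ` is large. -/
noncomputable def twistedCoords (E : Type*) [NormedAddCommGroup E] [InnerProductSpace ℝ E] {γ : ℝ}
    (hγ : 0 < γ) : (E × E) ≃L[ℝ] WithLp 2 (E × E) :=
  ((ContinuousLinearEquiv.refl ℝ E).skewProd
    (ContinuousLinearEquiv.smulLeft (Units.mk0 (2 / γ) (by positivity)))
    (ContinuousLinearMap.id ℝ E)).trans (WithLp.prodContinuousLinearEquiv 2 ℝ E E).symm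

variable {g : E → E} {K : ℝ≥0} {m h γ : ℝ}

lemma norm_twistedCoords_sq (hγ : 0 < γ) (z : E × E) :
    ‖twistedCoords E hγ z‖ ^ 2 = ‖z.1‖ ^ 2 + ‖z.1 + (2 / γ) • z.2‖ ^ 2 := by
  rw [WithLp.prod_norm_sq_eq_of_L2, add_comm z.1]
  rfl

lemma continuous_emStep (hg : Continuous g) (h γ : ℝ) :
    Continuous (Function.uncurry (emStep g h γ)) := by
  unfold emStep Function.uncurry
  fun_prop

lemma norm_add_smul_sq_le (X Y : E) (a : ℝ) :
    ‖X + a • Y‖ ^ 2 ≤ 2 * (‖X‖ ^ 2 + a ^ 2 * ‖Y‖ ^ 2) := by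
  calc ‖X + a • Y‖ ^ 2 ≤ (‖X‖ + ‖a • Y‖) ^ 2 := by
        gcongr
        exact norm_add_le _ _
    _ ≤ 2 * (‖X‖ ^ 2 + ‖a • Y‖ ^ 2) := add_sq_le
    _ = _ := by rw [norm_smul, mul_pow, Real.norm_eq_abs, sq_abs]

lemma norm_twistedCoords_sq_le (hγ : 0 < γ) (hm : 0 < m) (hmγ : 4 * m ≤ γ ^ 2) (z : E × E) :
    ‖twistedCoords E hγ z‖ ^ 2 ≤ 3 / m * (m * ‖z.1‖ ^ 2 + ‖z.2‖ ^ 2) := by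
  have hcoef : 8 / γ ^ 2 ≤ 3 / m := by
    rw [div_le_div_iff₀ (by positivity) hm]
    linarith
  calc ‖twistedCoords E hγ z‖ ^ 2 ≤ 3 * ‖z.1‖ ^ 2 + 8 / γ ^ 2 * ‖z.2‖ ^ 2 := by
        rw [norm_twistedCoords_sq]
        linear_combination norm_add_smul_sq_le z.1 z.2 (2 / γ)
    _ ≤ 3 * ‖z.1‖ ^ 2 + 3 / m * ‖z.2‖ ^ 2 := by gcongr
    _ = _ := by field_simp

section Drift

/- In this section `X`, `D` and `G` are the differences of the positions, velocities and forces of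
two copies of the chain driven by the same noise. -/

variable {X D G : E}

lemma inner_drift_le (hγ : 0 < γ) (hK : 4 * K ^ 2 ≤ m * γ ^ 2)
    (hmono : m * ‖X‖ ^ 2 ≤ inner ℝ G X) (hG : ‖G‖ ≤ K * ‖X‖) :
    inner ℝ X D - inner ℝ (X + (2 / γ) • D) (D + (2 / γ) • G) ≤
      -(1 / γ * (m * ‖X‖ ^ 2 + ‖D‖ ^ 2)) := by
  have hcross : -inner ℝ D G ≤ K * ‖X‖ * ‖D‖ := by
    calc -inner ℝ D G ≤ ‖D‖ * ‖G‖ := (neg_le_abs _).trans (abs_real_inner_le_norm _ _)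
      _ ≤ ‖D‖ * (K * ‖X‖) := by gcongr
      _ = _ := by ring
  have hyoung : 4 / γ * (K * ‖X‖ * ‖D‖) ≤ m * ‖X‖ ^ 2 + ‖D‖ ^ 2 := by
    have hK' : (2 * K / γ) ^ 2 ≤ m := by
      rw [div_pow, div_le_iff₀ (by positivity)]
      linarith
    calc 4 / γ * (K * ‖X‖ * ‖D‖) = 2 * (2 * K / γ * ‖X‖) * ‖D‖ := by ring
      _ ≤ (2 * K / γ * ‖X‖) ^ 2 + ‖D‖ ^ 2 := two_mul_le_add_sq _ _
      _ ≤ _ := by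
        rw [mul_pow]
        gcongr
  have hexpand : inner ℝ X D - inner ℝ (X + (2 / γ) • D) (D + (2 / γ) • G)
      = 1 / γ * (-2 * inner ℝ G X - 2 * ‖D‖ ^ 2 - 4 / γ * inner ℝ D G) := by
    simp only [inner_add_left, inner_add_right, real_inner_smul_left, real_inner_smul_right,
      real_inner_self_eq_norm_sq, real_inner_comm X G]
    ring
  rw [hexpand, ← mul_neg]
  gcongr
  linear_combination 2 * hmono + 4 / γ * hcross + hyoung

/- The inner product `⟪X, D⟫` cancels at first order in `h`, which is what dictates the factor
`2 / γ` in the coordinates. -/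
lemma norm_twistedCoords_drift_sq_le (hγ : 0 < γ) (hm : 0 < m) (hK : 4 * K ^ 2 ≤ m * γ ^ 2)
    (h0 : 0 ≤ h) (hh : 3 * γ * h ≤ 1) (hmono : m * ‖X‖ ^ 2 ≤ inner ℝ G X)
    (hG : ‖G‖ ≤ K * ‖X‖) :
    ‖twistedCoords E hγ (X + h • D, D - h • G - (γ * h) • D)‖ ^ 2 ≤
      ‖twistedCoords E hγ (X, D)‖ ^ 2 - h / γ * (m * ‖X‖ ^ 2 + ‖D‖ ^ 2) := by
  set Q := m * ‖X‖ ^ 2 + ‖D‖ ^ 2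
  set R := D + (2 / γ) • G
  have hstep : X + h • D + (2 / γ) • (D - h • G - (γ * h) • D) = X + (2 / γ) • D - h • R := by
    simp only [R]
    match_scalars <;> field_simp
    ring
  have hfirst := inner_drift_le (D := D) hγ hK hmono hG
  have hsecond : ‖D‖ ^ 2 + ‖R‖ ^ 2 ≤ 3 * Q := by
    have hG2 : (2 / γ) ^ 2 * ‖G‖ ^ 2 ≤ m * ‖X‖ ^ 2 := by
      calc (2 / γ) ^ 2 * ‖G‖ ^ 2 ≤ (2 / γ) ^ 2 * (K * ‖X‖) ^ 2 := by gcongr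
        _ = 4 * K ^ 2 / γ ^ 2 * ‖X‖ ^ 2 := by ring
        _ ≤ m * ‖X‖ ^ 2 := by
          gcongr
          rwa [div_le_iff₀ (by positivity)]
    linarith [norm_add_smul_sq_le D G (2 / γ), mul_nonneg hm.le (sq_nonneg ‖X‖)]
  have hQ0 : 0 ≤ Q := by positivity
  have hh2 : h ^ 2 * (3 * Q) ≤ h / γ * Q := by
    calc h ^ 2 * (3 * Q) = h / γ * Q * (3 * γ * h) := by field_simp
      _ ≤ h / γ * Q := mul_le_of_le_one_right (mul_nonneg (by positivity) hQ0) hh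
  simp only [norm_twistedCoords_sq, hstep]
  rw [norm_add_sq_real, norm_sub_sq_real, real_inner_smul_right, real_inner_smul_right, norm_smul,
    norm_smul, Real.norm_of_nonneg h0]
  linear_combination 2 * h * hfirst + h ^ 2 * hsecond + hh2

end Drift

lemma norm_twistedCoords_emStep_sub_le (hγ : 0 < γ) (hm : 0 < m) (hmγ : 4 * m ≤ γ ^ 2)
    (hK : 4 * K ^ 2 ≤ m * γ ^ 2) (h0 : 0 ≤ h) (hh : 3 * γ * h ≤ 1) (hg : LipschitzWith K g)
    (hmono : IsStronglyMonotone m g) (z z' : E × E) (w : E) :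
    ‖twistedCoords E hγ (emStep g h γ z w - emStep g h γ z' w)‖ ≤
      (1 - m * h / (6 * γ)) * ‖twistedCoords E hγ (z - z')‖ := by
  have hrate : 0 ≤ 1 - m * h / (6 * γ) := by
    rw [sub_nonneg, div_le_one (by positivity)]
    nlinarith
  have hsub : emStep g h γ z w - emStep g h γ z' w = ((z.1 - z'.1) + h • (z.2 - z'.2),
      (z.2 - z'.2) - h • (g z.1 - g z'.1) - (γ * h) • (z.2 - z'.2)) := by
    ext <;> simp only [emStep, Prod.fst_sub, Prod.snd_sub] <;> module
  have hdrift := norm_twistedCoords_drift_sq_le (D := z.2 - z'.2) hγ hm hK h0 hh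
    (hmono z.1 z'.1) (by simpa [dist_eq_norm] using hg.dist_le_mul z.1 z'.1)
  have hcoercive := norm_twistedCoords_sq_le hγ hm hmγ (z - z')
  have hscale : h / γ * (m / 3) * ‖twistedCoords E hγ (z - z')‖ ^ 2 ≤
      h / γ * (m * ‖(z - z').1‖ ^ 2 + ‖(z - z').2‖ ^ 2) := by
    calc h / γ * (m / 3) * ‖twistedCoords E hγ (z - z')‖ ^ 2
        ≤ h / γ * (m / 3) * (3 / m * (m * ‖(z - z').1‖ ^ 2 + ‖(z - z').2‖ ^ 2)) := by gcongr
      _ = _ := by field_simp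
  rw [hsub]
  refine le_of_sq_le_sq ?_ (by positivity)
  have hsq : 0 ≤ (m * h / (6 * γ)) ^ 2 * ‖twistedCoords E hγ (z - z')‖ ^ 2 := by positivity
  calc _ ≤ ‖twistedCoords E hγ (z - z')‖ ^ 2
        - h / γ * (m * ‖(z - z').1‖ ^ 2 + ‖(z - z').2‖ ^ 2) := hdrift
    _ ≤ _ := by linear_combination hscale + hsq

/-- The map `emStep` in the coordinates `twistedCoords`. -/
noncomputable def twistedStep (g : E → E) (h : ℝ) {γ : ℝ} (hγ : 0 < γ) (y : WithLp 2 (E × E))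
    (w : E) : WithLp 2 (E × E) :=
  twistedCoords E hγ (emStep g h γ ((twistedCoords E hγ).symm y) w)

lemma twistedStep_twistedCoords (hγ : 0 < γ) (z : E × E) (w : E) :
    twistedStep g h hγ (twistedCoords E hγ z) w = twistedCoords E hγ (emStep g h γ z w) := by
  rw [twistedStep, ContinuousLinearEquiv.symm_apply_apply]

lemma lipschitzWith_twistedStep (hγ : 0 < γ) (hm : 0 < m) (hmγ : 4 * m ≤ γ ^ 2)
    (hK : 4 * K ^ 2 ≤ m * γ ^ 2) (h0 : 0 ≤ h) (hh : 3 * γ * h ≤ 1) (hg : LipschitzWith K g)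
    (hmono : IsStronglyMonotone m g) (w : E) :
    LipschitzWith (1 - (m * h / (6 * γ)).toNNReal) (twistedStep g h hγ · w) := by
  have hrate : 1 - m * h / (6 * γ) ≤ ↑(1 - (m * h / (6 * γ)).toNNReal) := by
    rw [NNReal.coe_sub_def, NNReal.coe_one, Real.coe_toNNReal _ (by positivity)]
    exact le_max_left _ _
  refine LipschitzWith.of_dist_le_mul fun y y' => ?_
  obtain ⟨z, rfl⟩ := (twistedCoords E hγ).surjective y
  obtain ⟨z', rfl⟩ := (twistedCoords E hγ).surjective y'
  rw [twistedStep_twistedCoords, twistedStep_twistedCoords, dist_eq_norm, dist_eq_norm, ← map_sub,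
    ← map_sub]
  exact (norm_twistedCoords_emStep_sub_le hγ hm hmγ hK h0 hh hg hmono z z' w).trans (by gcongr)

lemma edist_twistedStep_zero_noise_sq (hγ : 0 < γ) (h0 : 0 ≤ h) (y : WithLp 2 (E × E)) (w : E) :
    edist (twistedStep g h hγ y w) (twistedStep g h hγ y 0) ^ 2 =
      ENNReal.ofReal (8 * h / γ) * ‖w‖ₑ ^ 2 := by
  set z := (twistedCoords E hγ).symm y
  have hsub : emStep g h γ z w - emStep g h γ z 0 = (0, √(2 * γ * h) • w) := by
    simp [emStep]
  have hnorm : ‖twistedCoords E hγ (0, √(2 * γ * h) • w)‖ ^ 2 = 8 * h / γ * ‖w‖ ^ 2 := by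
    rw [norm_twistedCoords_sq, norm_zero, zero_add, norm_smul, norm_smul, Real.norm_of_nonneg
      (by positivity), Real.norm_of_nonneg (by positivity), mul_pow, mul_pow,
      Real.sq_sqrt (by positivity)]
    field_simp
    ring
  rw [edist_eq_enorm_sub, twistedStep, twistedStep, ← map_sub, hsub, ← ofReal_norm,
    ← ENNReal.ofReal_pow (norm_nonneg _), hnorm, ENNReal.ofReal_mul (by positivity),
    ENNReal.ofReal_pow (norm_nonneg _), ofReal_norm]

theorem isContractiveIteration_twistedStep [MeasurableSpace E] [BorelSpace E]
    [SecondCountableTopology E] {ν : Measure E} {M : ℝ≥0} (hM : ∫⁻ w, ‖w‖ₑ ^ 2 ∂ν ≤ M)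
    (hγ : 0 < γ) (hm : 0 < m) (hmγ : 4 * m ≤ γ ^ 2) (hK : 4 * K ^ 2 ≤ m * γ ^ 2) (h0 : 0 < h)
    (hh : 3 * γ * h ≤ 1) (hg : LipschitzWith K g) (hmono : IsStronglyMonotone m g) :
    IsContractiveIteration (twistedStep g h hγ) ν (m * h / (6 * γ)).toNNReal
      ((8 * h / γ).toNNReal * M) where
  pos := Real.toNNReal_pos.2 (by positivity)
  le_one := by
    rw [Real.toNNReal_le_one, div_le_one (by positivity)]
    nlinarith
  measurable := by
    refine Continuous.measurable ?_
    have := continuous_emStep hg.continuous h γ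
    unfold twistedStep Function.uncurry
    fun_prop
  lipschitz := lipschitzWith_twistedStep hγ hm hmγ hK h0.le hh hg hmono
  spread y := by
    refine ⟨twistedStep g h hγ y 0, ?_⟩
    simp only [edist_twistedStep_zero_noise_sq hγ h0.le]
    rw [lintegral_const_mul' _ _ ENNReal.ofReal_ne_top, ENNReal.coe_mul]
    exact mul_le_mul_right hM _

end Contraction

section Tilted

variable {S T : Type*} [MeasurableSpace S] [MeasurableSpace T]

lemma prod_tilted {μ : Measure S} {ν : Measure T} [SFinite μ] [SFinite ν] {V : S → ℝ} {W : T → ℝ}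
    (hV : Measurable V) (hW : Measurable W) :
    (μ.tilted V).prod (ν.tilted W) = (μ.prod ν).tilted fun z => V z.1 + W z.2 := by
  have hmass : ∫ z, Real.exp (V z.1 + W z.2) ∂μ.prod ν
      = (∫ x, Real.exp (V x) ∂μ) * ∫ y, Real.exp (W y) ∂ν := by
    simp only [Real.exp_add]
    exact integral_prod_mul (fun x => Real.exp (V x)) fun y => Real.exp (W y)
  rw [Measure.tilted, Measure.tilted, prod_withDensity (by fun_prop) (by fun_prop), Measure.tilted,
    hmass]
  refine withDensity_congr_ae (ae_of_all _ fun z => ?_)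
  beta_reduce
  rw [← ENNReal.ofReal_mul (by positivity), Real.exp_add, div_mul_div_comm]

lemma integral_comp_measurePreserving {μ : Measure S} {ν : Measure T} {e : S → T}
    (he : MeasurePreserving e μ ν) {F : T → ℝ} (hF : Integrable F ν) :
    ∫ x, F (e x) ∂μ = ∫ y, F y ∂ν := by
  rw [← integral_map he.aemeasurable (by rw [he.map_eq]; exact hF.1), he.map_eq]

lemma abs_exp_sub_exp_le (s t : ℝ) :
    |Real.exp s - Real.exp t| ≤ |s - t| * (Real.exp s + Real.exp t) := by
  wlog hst : t ≤ s generalizing s t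
  · simpa only [abs_sub_comm, add_comm] using this t s (le_of_not_ge hst)
  have hconvex : Real.exp s * (1 - (s - t)) ≤ Real.exp t := by
    calc Real.exp s * (1 - (s - t)) ≤ Real.exp s * Real.exp (-(s - t)) := by
          gcongr
          exact Real.one_sub_le_exp_neg _
      _ = Real.exp t := by
          rw [← Real.exp_add]
          ring_nf
  rw [abs_of_nonneg (sub_nonneg.2 (Real.exp_le_exp.2 hst)), abs_of_nonneg (sub_nonneg.2 hst)]
  nlinarith [mul_nonneg (sub_nonneg.2 hst) (Real.exp_pos t).le]

variable {μ : Measure S} {V G Θ : S → ℝ} {Ψ a b : S → S}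

/- Both integrals on the left equal integrals of `G ∘ b`, against the densities `exp (V ∘ a)` and
`exp (V ∘ b)`. -/
lemma abs_integral_exp_mul_comp_sub_le
    (ha : MeasurePreserving a μ μ) (hb : MeasurePreserving b μ μ) (hab : ∀ y, Ψ (a y) = b y)
    (hGΨ : Integrable (fun z => Real.exp (V z) * G (Ψ z)) μ)
    (hG : Integrable (fun z => Real.exp (V z) * G z) μ)
    (hΘ : Integrable (fun z => Real.exp (V z) * Θ z) μ)
    (hΘa : ∀ y, |G (b y)| * |V (a y) - V (b y)| ≤ Θ (a y))
    (hΘb : ∀ y, |G (b y)| * |V (a y) - V (b y)| ≤ Θ (b y)) :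
    |∫ z, Real.exp (V z) * G (Ψ z) ∂μ - ∫ z, Real.exp (V z) * G z ∂μ| ≤
      2 * ∫ z, Real.exp (V z) * Θ z ∂μ := by
  have hGa := ha.integrable_comp_of_integrable hGΨ
  have hGb := hb.integrable_comp_of_integrable hG
  have hΘa_int := ha.integrable_comp_of_integrable hΘ
  have hΘb_int := hb.integrable_comp_of_integrable hΘ
  simp only [Function.comp_def, hab] at hGa hGb hΘa_int hΘb_int
  calc |∫ z, Real.exp (V z) * G (Ψ z) ∂μ - ∫ z, Real.exp (V z) * G z ∂μ|
      = |∫ y, (Real.exp (V (a y)) * G (b y) - Real.exp (V (b y)) * G (b y)) ∂μ| := by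
        rw [integral_sub hGa hGb, ← integral_comp_measurePreserving ha hGΨ,
          ← integral_comp_measurePreserving hb hG]
        simp only [hab]
    _ ≤ ∫ y, (Real.exp (V (a y)) * Θ (a y) + Real.exp (V (b y)) * Θ (b y)) ∂μ := by
        rw [← Real.norm_eq_abs]
        refine norm_integral_le_of_norm_le (hΘa_int.add hΘb_int) (ae_of_all _ fun y => ?_)
        rw [← sub_mul, Real.norm_eq_abs, abs_mul]
        calc |Real.exp (V (a y)) - Real.exp (V (b y))| * |G (b y)|
            ≤ |V (a y) - V (b y)| * (Real.exp (V (a y)) + Real.exp (V (b y))) * |G (b y)| := by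
              gcongr
              exact abs_exp_sub_exp_le _ _
          _ = Real.exp (V (a y)) * (|G (b y)| * |V (a y) - V (b y)|)
                + Real.exp (V (b y)) * (|G (b y)| * |V (a y) - V (b y)|) := by ring
          _ ≤ _ := by gcongr; exacts [hΘa y, hΘb y]
    _ = 2 * ∫ z, Real.exp (V z) * Θ z ∂μ := by
        rw [integral_add hΘa_int hΘb_int, integral_comp_measurePreserving ha hΘ,
          integral_comp_measurePreserving hb hΘ, two_mul]

lemma abs_integral_tilted_comp_sub_le (hexp : Integrable (fun z => Real.exp (V z)) μ)
    (ha : MeasurePreserving a μ μ) (hb : MeasurePreserving b μ μ) (hab : ∀ y, Ψ (a y) = b y)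
    (hGΨ : Integrable (fun z => G (Ψ z)) (μ.tilted V)) (hG : Integrable G (μ.tilted V))
    (hΘ : Integrable Θ (μ.tilted V))
    (hΘa : ∀ y, |G (b y)| * |V (a y) - V (b y)| ≤ Θ (a y))
    (hΘb : ∀ y, |G (b y)| * |V (a y) - V (b y)| ≤ Θ (b y)) :
    |∫ z, G (Ψ z) ∂μ.tilted V - ∫ z, G z ∂μ.tilted V| ≤ 2 * ∫ z, Θ z ∂μ.tilted V := by
  set Z := ∫ z, Real.exp (V z) ∂μ
  have integral_eq (F : S → ℝ) :
      ∫ z, F z ∂μ.tilted V = Z⁻¹ * ∫ z, Real.exp (V z) * F z ∂μ := by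
    rw [integral_tilted, ← integral_const_mul]
    simp only [smul_eq_mul, div_eq_inv_mul, mul_assoc, Z]
  have hZ : 0 ≤ Z⁻¹ := inv_nonneg.2 (integral_nonneg fun _ => (Real.exp_pos _).le)
  have hle := abs_integral_exp_mul_comp_sub_le ha hb hab ((integrable_tilted_iff hexp _).1 hGΨ)
    ((integrable_tilted_iff hexp _).1 hG) ((integrable_tilted_iff hexp _).1 hΘ) hΘa hΘb
  rw [integral_eq, integral_eq, integral_eq, ← mul_sub, abs_mul, abs_of_nonneg hZ, mul_left_comm]
  gcongr

end Tilted

section Boltzmann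

variable {E : Type*} [NormedAddCommGroup E] [InnerProductSpace ℝ E] [FiniteDimensional ℝ E]
  [MeasurableSpace E] [BorelSpace E] {V : E → ℝ} {a b : ℝ}

lemma integrable_exp_neg_mul_norm_sq (hb : 0 < b) :
    Integrable fun x : E => Real.exp (-(b * ‖x‖ ^ 2)) := by
  have h := (GaussianFourier.integrable_cexp_neg_mul_sq_norm_add (b := (b : ℂ)) (by simpa) 0
    (0 : E)).norm
  refine h.congr (ae_of_all _ fun x => ?_)
  simp [Complex.norm_exp, ← Complex.ofReal_pow]

lemma integrable_exp_neg_mul_one_add_norm_pow (hV : Measurable V) (hb : 0 < b)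
    (hVb : ∀ x, b * ‖x‖ ^ 2 - a ≤ V x) (k : ℕ) :
    Integrable fun x => Real.exp (-V x) * (1 + ‖x‖) ^ k := by
  refine ((integrable_exp_neg_mul_norm_sq (E := E) (half_pos hb)).const_mul
    (k.factorial * Real.exp (1 + a + 1 / (2 * b)))).mono' (by fun_prop)
    (ae_of_all _ fun x => ?_)
  have hpow : (1 + ‖x‖) ^ k ≤ k.factorial * Real.exp (1 + ‖x‖) := by
    rw [← div_le_iff₀' (by positivity)]
    exact Real.pow_div_factorial_le_exp _ (by positivity) k
  have hyoung : ‖x‖ ≤ b / 2 * ‖x‖ ^ 2 + 1 / (2 * b) := by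
    have h : 0 ≤ (b * ‖x‖ - 1) ^ 2 / (2 * b) := by positivity
    have hexpand : (b * ‖x‖ - 1) ^ 2 / (2 * b) = b / 2 * ‖x‖ ^ 2 - ‖x‖ + 1 / (2 * b) := by
      field_simp
      ring
    linarith
  rw [Real.norm_of_nonneg (by positivity)]
  calc Real.exp (-V x) * (1 + ‖x‖) ^ k
      ≤ Real.exp (-V x) * (k.factorial * Real.exp (1 + ‖x‖)) := by gcongr
    _ = k.factorial * Real.exp (1 + ‖x‖ - V x) := by
        rw [sub_eq_add_neg, Real.exp_add (1 + ‖x‖)]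
        ring
    _ ≤ k.factorial * Real.exp (1 + a + 1 / (2 * b) + -(b / 2 * ‖x‖ ^ 2)) := by
        gcongr
        linarith [hVb x]
    _ = _ := by rw [Real.exp_add _ (-(b / 2 * ‖x‖ ^ 2)), mul_assoc]

lemma integrable_exp_neg (hV : Measurable V) (hb : 0 < b) (hVb : ∀ x, b * ‖x‖ ^ 2 - a ≤ V x) :
    Integrable fun x => Real.exp (-V x) := by
  simpa using integrable_exp_neg_mul_one_add_norm_pow hV hb hVb 0

lemma integrable_one_add_norm_pow_tilted_neg (hV : Measurable V) (hb : 0 < b)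
    (hVb : ∀ x, b * ‖x‖ ^ 2 - a ≤ V x) (k : ℕ) :
    Integrable (fun x => (1 + ‖x‖) ^ k) (volume.tilted fun x => -V x) :=
  (integrable_tilted_iff (integrable_exp_neg hV hb hVb) _).2
    (integrable_exp_neg_mul_one_add_norm_pow hV hb hVb k)

variable (E) in
lemma stdGaussian_eq_tilted :
    stdGaussian E = volume.tilted fun v : E => -(‖v‖ ^ 2 / 2) := by
  have hexp : Integrable fun v : E => Real.exp (-(‖v‖ ^ 2 / 2)) := by
    simpa only [div_eq_inv_mul] using integrable_exp_neg_mul_norm_sq (E := E) (b := 2⁻¹) (by simp)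
  have := isProbabilityMeasure_tilted hexp
  obtain ⟨Z, fourier⟩ : ∃ Z : ℂ, ∀ t : E,
      ∫ v : E, (Real.exp (-(‖v‖ ^ 2 / 2)) : ℂ) * Complex.exp (inner ℝ v t * Complex.I)
        = Z * Complex.exp (-‖t‖ ^ 2 / 2) := by
    refine ⟨(Real.pi / (1 / 2)) ^ (Module.finrank ℝ E / 2 : ℂ), fun t => ?_⟩
    have h := GaussianFourier.integral_cexp_neg_mul_sq_norm_add (b := (1 / 2 : ℂ)) (by norm_num)
      Complex.I t
    rw [Complex.I_sq, show (-1 * ‖t‖ ^ 2 / (4 * (1 / 2)) : ℂ) = -‖t‖ ^ 2 / 2 by ring] at h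
    rw [← h]
    refine integral_congr_ae (ae_of_all _ fun v => ?_)
    simp only [Complex.ofReal_exp, ← Complex.exp_add]
    push_cast
    rw [real_inner_comm]
    ring_nf
  have hmass : (∫ v : E, Real.exp (-(‖v‖ ^ 2 / 2)) : ℝ) = Z := by
    rw [← integral_complex_ofReal]
    simpa using fourier 0
  have hZ : Z ≠ 0 := hmass ▸ Complex.ofReal_ne_zero.2 (integral_exp_pos hexp).ne'
  refine Measure.ext_of_charFun (funext fun t => ?_)
  rw [charFun_stdGaussian, charFun_apply, integral_tilted]
  simp only [Complex.real_smul, Complex.ofReal_div, hmass, div_mul_eq_mul_div]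
  rw [integral_div, fourier, mul_div_cancel_left₀ _ hZ]

lemma measurePreserving_rotation_stdGaussian {η σ : ℝ} (hησ : η ^ 2 + σ ^ 2 = 1) :
    MeasurePreserving (fun p : E × E => η • p.1 + σ • p.2) ((stdGaussian E).prod (stdGaussian E))
      (stdGaussian E) := by
  obtain ⟨θ, rfl, rfl⟩ : ∃ θ : ℝ, Real.cos θ = η ∧ Real.sin θ = σ := by
    have hnorm : ‖(⟨η, σ⟩ : ℂ)‖ = 1 := by simp [Complex.norm_eq_sqrt_sq_add_sq, hησ]
    have hne : (⟨η, σ⟩ : ℂ) ≠ 0 := norm_ne_zero_iff.1 (hnorm ▸ one_ne_zero)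
    exact ⟨Complex.arg ⟨η, σ⟩, by simp [Complex.cos_arg hne, hnorm],
      by simp [Complex.sin_arg, hnorm]⟩
  have hrot : MeasurePreserving (ContinuousLinearMap.rotation (E := E) θ)
      ((stdGaussian E).prod (stdGaussian E)) ((stdGaussian E).prod (stdGaussian E)) :=
    ⟨by fun_prop, IsGaussian.map_rotation_eq_self (by simp) θ⟩
  exact measurePreserving_fst.comp hrot

/-- The Boltzmann measure on phase space, with density proportional to
`exp (-(‖v‖ ^ 2 / 2 + U x))`. -/
noncomputable def boltzmann (U : E → ℝ) : Measure (E × E) :=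
  volume.tilted fun z => -(‖z.2‖ ^ 2 / 2 + U z.1)

variable {U : E → ℝ}

lemma boltzmann_eq_prod (hU : Measurable U) :
    boltzmann U = (volume.tilted fun x => -U x).prod (stdGaussian E) := by
  rw [stdGaussian_eq_tilted, prod_tilted (by fun_prop) (by fun_prop), boltzmann]
  simp only [neg_add_rev]
  rfl

lemma integral_boltzmann (U : E → ℝ) (f : E × E → ℝ) :
    ∫ z, f z ∂boltzmann U = (∫ z : E × E, f z * Real.exp (-(‖z.2‖ ^ 2 / 2 + U z.1))) /
      ∫ z : E × E, Real.exp (-(‖z.2‖ ^ 2 / 2 + U z.1)) := by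
  rw [boltzmann, integral_tilted, ← integral_div]
  simp only [smul_eq_mul, div_mul_eq_mul_div, mul_comm (Real.exp _)]

section Confining

variable (hU : Measurable U) (hb : 0 < b) (hUb : ∀ x, b * ‖x‖ ^ 2 - a ≤ U x)
include hU hb hUb

lemma isProbabilityMeasure_boltzmann : IsProbabilityMeasure (boltzmann U) := by
  have := isProbabilityMeasure_tilted (integrable_exp_neg hU hb hUb)
  rw [boltzmann_eq_prod hU]
  infer_instance

lemma integrable_exp_neg_energy :
    Integrable fun z : E × E => Real.exp (-(‖z.2‖ ^ 2 / 2 + U z.1)) := by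
  have hkinetic : Integrable fun v : E => Real.exp (-(‖v‖ ^ 2 / 2)) := by
    simpa only [div_eq_inv_mul] using integrable_exp_neg_mul_norm_sq (E := E) (b := 2⁻¹) (by simp)
  refine ((integrable_exp_neg hU hb hUb).mul_prod hkinetic).congr (ae_of_all _ fun z => ?_)
  beta_reduce
  rw [← Real.exp_add, neg_add_rev]

lemma integrable_one_add_norm_pow_boltzmann (k : ℕ) :
    Integrable (fun z => (1 + ‖z‖) ^ k) (boltzmann U) := by
  have hvel := integrable_one_add_norm_pow_tilted_neg (E := E) (V := fun v => ‖v‖ ^ 2 / 2)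
    (b := 1 / 2) (a := 0) (by fun_prop) one_half_pos (fun v => by linarith) k
  rw [← stdGaussian_eq_tilted] at hvel
  rw [boltzmann_eq_prod hU]
  refine ((integrable_one_add_norm_pow_tilted_neg hU hb hUb k).mul_prod hvel).mono'
    (by fun_prop) (ae_of_all _ fun z => ?_)
  rw [Real.norm_of_nonneg (by positivity), ← mul_pow]
  gcongr
  rcases max_cases ‖z.1‖ ‖z.2‖ with h | h <;> rw [Prod.norm_def, h.1] <;>
    nlinarith [norm_nonneg z.1, norm_nonneg z.2, mul_nonneg (norm_nonneg z.1) (norm_nonneg z.2)]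

lemma integrable_dist_zero_boltzmann : Integrable (dist 0) (boltzmann U) := by
  refine (integrable_one_add_norm_pow_boltzmann hU hb hUb 1).mono' (by fun_prop)
    (ae_of_all _ fun z => ?_)
  simp

end Confining

lemma integral_velocity_rotation_boltzmann (hU : Measurable U) {η σ : ℝ}
    (hησ : η ^ 2 + σ ^ 2 = 1) {F : E × E → ℝ} (hF : Integrable F (boltzmann U)) :
    ∫ z, ∫ w, F (z.1, η • z.2 + σ • w) ∂stdGaussian E ∂boltzmann U = ∫ z, F z ∂boltzmann U := by
  rw [boltzmann_eq_prod hU] at hF ⊢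
  set ρ : Measure E := volume.tilted fun x => -U x
  have hmap : MeasurePreserving (fun p : (E × E) × E => (p.1.1, η • p.1.2 + σ • p.2))
      ((ρ.prod (stdGaussian E)).prod (stdGaussian E)) (ρ.prod (stdGaussian E)) :=
    ((MeasurePreserving.id ρ).prod (measurePreserving_rotation_stdGaussian hησ)).comp
      (measurePreserving_prodAssoc ρ (stdGaussian E) (stdGaussian E))
  calc ∫ z, ∫ w, F (z.1, η • z.2 + σ • w) ∂stdGaussian E ∂ρ.prod (stdGaussian E)
      = ∫ p : (E × E) × E, F (p.1.1, η • p.1.2 + σ • p.2)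
          ∂(ρ.prod (stdGaussian E)).prod (stdGaussian E) :=
        (integral_prod _ (hmap.integrable_comp_of_integrable hF)).symm
    _ = ∫ z, F z ∂ρ.prod (stdGaussian E) := integral_comp_measurePreserving hmap hF

end Boltzmann

section Potential

section NormedSpace

variable {E F : Type*} [NormedAddCommGroup E] [NormedSpace ℝ E] [NormedAddCommGroup F]
  [NormedSpace ℝ F] {f : E → F}

lemma hasDerivAt_comp_add_smul (hf : Differentiable ℝ f) (x e : E) (t : ℝ) :
    HasDerivAt (fun t : ℝ => f (x + t • e)) (fderiv ℝ f (x + t • e) e) t := by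
  have hline : HasDerivAt (fun t : ℝ => x + t • e) e t := by
    simpa only [id_eq, one_smul] using ((hasDerivAt_id t).smul_const e).const_add x
  exact (hf _).hasFDerivAt.comp_hasDerivAt t hline

lemma lipschitzWith_of_norm_iteratedFDeriv_one_le {C : ℝ} (hf : Differentiable ℝ f)
    (hC : ∀ x, ‖iteratedFDeriv ℝ 1 f x‖ ≤ C) : LipschitzWith C.toNNReal f :=
  lipschitzWith_of_nnnorm_fderiv_le hf fun x =>
    NNReal.le_toNNReal_of_coe_le ((norm_iteratedFDeriv_one f).symm.trans_le (hC x))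

end NormedSpace

variable {E : Type*} [NormedAddCommGroup E] [InnerProductSpace ℝ E] [CompleteSpace E]
  {U : E → ℝ} {K : ℝ≥0} {C m : ℝ}

lemma IsStronglyMonotone.quadratic_le (hmono : IsStronglyMonotone m (gradient U))
    (hU : Differentiable ℝ U) (x e : E) :
    U x + inner ℝ (gradient U x) e + m / 2 * ‖e‖ ^ 2 ≤ U (x + e) := by
  have hderiv (t : ℝ) : HasDerivAt
      (fun t : ℝ => U (x + t • e) - (t * inner ℝ (gradient U x) e + t ^ 2 * (m / 2 * ‖e‖ ^ 2)))
      (inner ℝ (gradient U (x + t • e)) e - (inner ℝ (gradient U x) e + t * (m * ‖e‖ ^ 2))) t := by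
    refine ((hasDerivAt_comp_add_smul hU x e t).sub (((hasDerivAt_id t).mul_const _).add
      ((hasDerivAt_pow 2 t).mul_const _))).congr_deriv ?_
    rw [inner_gradient_left]
    norm_num
    ring
  obtain ⟨t, ⟨ht, -⟩, hslope⟩ := exists_hasDerivAt_eq_slope _ _ zero_lt_one
    (fun t _ => (hderiv t).continuousAt.continuousWithinAt) fun t _ => hderiv t
  have hmono_t := hmono (x + t • e) x
  rw [add_sub_cancel_left, norm_smul, inner_smul_right, inner_sub_left, mul_pow, Real.norm_eq_abs,
    sq_abs] at hmono_t
  have hnonneg : 0 ≤ inner ℝ (gradient U (x + t • e)) e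
      - (inner ℝ (gradient U x) e + t * (m * ‖e‖ ^ 2)) :=
    nonneg_of_mul_nonneg_right (by linear_combination hmono_t) ht
  rw [hslope, one_smul, zero_smul, add_zero] at hnonneg
  linarith

lemma IsStronglyMonotone.exists_quadratic_sub_le (hmono : IsStronglyMonotone m (gradient U))
    (hU : Differentiable ℝ U) (hm : 0 < m) : ∃ a, ∀ x, m / 4 * ‖x‖ ^ 2 - a ≤ U x := by
  refine ⟨‖gradient U 0‖ ^ 2 / m - U 0, fun x => ?_⟩
  have hquad := hmono.quadratic_le hU 0 x
  rw [zero_add] at hquad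
  have hinner := (abs_le.1 (abs_real_inner_le_norm (gradient U 0) x)).1
  have hyoung : ‖gradient U 0‖ * ‖x‖ ≤ ‖gradient U 0‖ ^ 2 / m + m / 4 * ‖x‖ ^ 2 := by
    rw [← sub_nonneg]
    calc 0 ≤ m * (‖gradient U 0‖ / m - ‖x‖ / 2) ^ 2 := by positivity
      _ = _ := by
        field_simp
        ring
  linarith

lemma abs_sub_sub_inner_gradient_le (hU : Differentiable ℝ U)
    (hK : LipschitzWith K (gradient U)) (x e : E) :
    |U (x + e) - U x - inner ℝ (gradient U x) e| ≤ K * ‖e‖ ^ 2 := by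
  obtain ⟨t, ⟨ht0, ht1⟩, hslope⟩ := exists_hasDerivAt_eq_slope _ _ zero_lt_one
    (fun t _ => (hasDerivAt_comp_add_smul hU x e t).continuousAt.continuousWithinAt)
    fun t _ => hasDerivAt_comp_add_smul hU x e t
  rw [← inner_gradient_left, one_smul, zero_smul, add_zero, sub_zero, div_one] at hslope
  rw [← hslope, ← inner_sub_left]
  calc |inner ℝ (gradient U (x + t • e) - gradient U x) e|
      ≤ ‖gradient U (x + t • e) - gradient U x‖ * ‖e‖ := abs_real_inner_le_norm _ _
    _ ≤ K * (t * ‖e‖) * ‖e‖ := by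
      gcongr
      refine (hK.norm_sub_le _ _).trans_eq ?_
      rw [add_sub_cancel_left, norm_smul, Real.norm_of_nonneg ht0.le]
    _ ≤ K * (1 * ‖e‖) * ‖e‖ := by gcongr
    _ = K * ‖e‖ ^ 2 := by ring

lemma lipschitzWith_gradient (hU : ContDiff ℝ 2 U)
    (hC : ∀ x, ‖iteratedFDeriv ℝ 2 U x‖ ≤ C) : LipschitzWith C.toNNReal (gradient U) := by
  have hfderiv : LipschitzWith C.toNNReal (fderiv ℝ U) :=
    lipschitzWith_of_norm_iteratedFDeriv_one_le
      ((hU.fderiv_right (m := 1) (by norm_num)).differentiable one_ne_zero)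
      fun x => norm_iteratedFDeriv_fderiv.trans_le (hC x)
  exact ((InnerProductSpace.toDual ℝ E).symm.lipschitz.comp hfderiv).weaken (one_mul _).le

lemma isStronglyMonotone_gradient (hU : ContDiff ℝ 2 U)
    (hconv : ∀ x y, m * ‖y‖ ^ 2 ≤ iteratedFDeriv ℝ 2 U x ![y, y]) :
    IsStronglyMonotone m (gradient U) := by
  intro x y
  have hdiff : Differentiable ℝ (fderiv ℝ U) :=
    (hU.fderiv_right (m := 1) (by norm_num)).differentiable one_ne_zero
  have hderiv (t : ℝ) := (hasDerivAt_comp_add_smul hdiff y (x - y) t).clm_apply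
    (hasDerivAt_const t (x - y))
  obtain ⟨t, -, hslope⟩ := exists_hasDerivAt_eq_slope _ _ zero_lt_one
    (fun t _ => (hderiv t).continuousAt.continuousWithinAt) fun t _ => hderiv t
  have hconv_t := hconv (y + t • (x - y)) (x - y)
  rw [iteratedFDeriv_two_apply] at hconv_t
  simp only [Matrix.cons_val_zero, Matrix.cons_val_one, map_zero, add_zero, one_smul, zero_smul,
    add_sub_cancel, sub_zero, div_one] at hconv_t hslope
  rwa [inner_sub_left, inner_gradient_left, inner_gradient_left, ← hslope]

end Potential

section Splitting

lemma norm_le_mul_one_add_norm {E : Type*} [NormedAddCommGroup E] {g : E → E} {M : ℝ≥0}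
    (hg : LipschitzWith M g) (hg0 : ‖g 0‖ ≤ M) (x : E) :
    ‖g x‖ ≤ M * (1 + ‖x‖) := by
  have hdist := hg.norm_sub_le x 0
  rw [sub_zero] at hdist
  linarith [norm_le_norm_add_norm_sub (g 0) (g x), norm_sub_rev (g 0) (g x)]

section NormedSpace

variable {E : Type*} [NormedAddCommGroup E] [NormedSpace ℝ E] {g : E → E} {M : ℝ≥0} {h : ℝ}

/-- The exact flow of `dx = v dt`, `dv = 0` for time `h`. -/
def drift (h : ℝ) (z : E × E) : E × E := (z.1 + h • z.2, z.2)

/-- The exact flow of `dx = 0`, `dv = -g(x) dt` for time `h`. -/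
def kick (g : E → E) (h : ℝ) (z : E × E) : E × E := (z.1, z.2 - h • g z.1)

/-- The partial velocity refreshment `v ↦ η v + σ w`. For `η ^ 2 + σ ^ 2 = 1` and Gaussian noise `w`
this is the exact flow of an Ornstein–Uhlenbeck process. -/
def refresh (η σ : ℝ) (z : E × E) (w : E) : E × E := (z.1, η • z.2 + σ • w)

lemma drift_drift_neg (h : ℝ) (z : E × E) : drift h (drift (-h) z) = z := by simp [drift]

lemma norm_drift_le (h0 : 0 ≤ h) (h1 : h ≤ 1) (z : E × E) : ‖drift h z‖ ≤ 2 * ‖z‖ := by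
  have hsmul : ‖h • z.2‖ ≤ 1 * ‖z‖ := by
    rw [norm_smul, Real.norm_of_nonneg h0]
    gcongr
    exact norm_snd_le z
  refine max_le ?_ ((norm_snd_le z).trans (le_mul_of_one_le_left (norm_nonneg z) one_le_two))
  exact (norm_add_le_of_le (norm_fst_le z) hsmul).trans_eq (by ring)

lemma norm_kick_sub_le (hg : LipschitzWith M g) (hg0 : ‖g 0‖ ≤ M) (h0 : 0 ≤ h)
    (hMh : 2 * (M * h) ≤ 1) (z : E × E) : ‖kick g h z - z‖ ≤ (1 + ‖z‖) / 2 := by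
  have hsub : kick g h z - z = (0, -(h • g z.1)) := by
    ext <;> simp [kick]
  rw [hsub, Prod.norm_mk, norm_zero, max_eq_right (norm_nonneg _), norm_neg, norm_smul,
    Real.norm_of_nonneg h0]
  calc h * ‖g z.1‖ ≤ h * (M * (1 + ‖z‖)) := by
        gcongr
        exact (norm_le_mul_one_add_norm hg hg0 z.1).trans (by gcongr; exact norm_fst_le z)
    _ ≤ (1 + ‖z‖) / 2 := by nlinarith [norm_nonneg z]

lemma exists_lipschitzWith_kick_drift (hg : LipschitzWith M g) (h : ℝ) :
    ∃ c, LipschitzWith c fun z => kick g h (drift h z) := by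
  have hfst : LipschitzWith 1 (Prod.fst : E × E → E) := LipschitzWith.prod_fst
  have hsnd : LipschitzWith 1 (Prod.snd : E × E → E) := LipschitzWith.prod_snd
  have hdrift := (hfst.add ((lipschitzWith_smul h).comp hsnd)).prodMk hsnd
  have hkick := hfst.prodMk (hsnd.sub ((lipschitzWith_smul h).comp (hg.comp hfst)))
  exact ⟨_, hkick.comp hdrift⟩

end NormedSpace

section InnerProductSpace

variable {E : Type*} [NormedAddCommGroup E] [InnerProductSpace ℝ E] {g : E → E} {U : E → ℝ}
  {M : ℝ≥0} {h γ : ℝ}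

lemma exists_lipschitzWith_emStep (hg : LipschitzWith M g) (h γ : ℝ) :
    ∃ c, ∀ w, LipschitzWith c (emStep g h γ · w) := by
  have hfst : LipschitzWith 1 (Prod.fst : E × E → E) := LipschitzWith.prod_fst
  have hsnd : LipschitzWith 1 (Prod.snd : E × E → E) := LipschitzWith.prod_snd
  have hposition := hfst.add ((lipschitzWith_smul h).comp hsnd)
  have hvelocity := (hsnd.sub ((lipschitzWith_smul h).comp (hg.comp hfst))).sub
    ((lipschitzWith_smul (γ * h)).comp hsnd)
  exact ⟨_, fun w => hposition.prodMk (hvelocity.add (LipschitzWith.const _))⟩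

lemma one_sub_mul_sub_sqrt_mem_Icc (h0 : 0 ≤ γ * h) (hγh : 2 * (γ * h) ≤ 1) :
    1 - γ * h - √(1 - 2 * γ * h) ∈ Set.Icc 0 (2 * (γ * h) ^ 2) := by
  have hsq := Real.sq_sqrt (show 0 ≤ 1 - 2 * γ * h by linarith)
  have hη := Real.sqrt_nonneg (1 - 2 * γ * h)
  constructor <;> nlinarith

lemma norm_emStep_sub_refresh_kick_drift_le (hg : LipschitzWith M g) (hg0 : ‖g 0‖ ≤ M)
    (h0 : 0 ≤ h) (hγ : 0 ≤ γ) (hγh : 2 * (γ * h) ≤ 1) (z : E × E) (w : E) :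
    ‖emStep g h γ z w - refresh (√(1 - 2 * γ * h)) (√(2 * γ * h)) (kick g h (drift h z)) w‖ ≤
      h ^ 2 * (2 * γ ^ 2 + 2 * γ * M + M) * (1 + ‖z‖) := by
  obtain ⟨hη_upper, hη_lower⟩ := one_sub_mul_sub_sqrt_mem_Icc (mul_nonneg hγ h0) hγh
  set η := √(1 - 2 * γ * h)
  have hη0 : 0 ≤ η := Real.sqrt_nonneg _
  have hη1 : 0 ≤ 1 - η := by linarith [mul_nonneg hγ h0]
  have hη2 : 1 - η ≤ 2 * (γ * h) := by
    nlinarith [mul_le_mul_of_nonneg_left hγh (mul_nonneg hγ h0)]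
  have hforce : ‖g z.1‖ ≤ M * (1 + ‖z‖) :=
    (norm_le_mul_one_add_norm hg hg0 z.1).trans (by gcongr; exact norm_fst_le z)
  have hincr : ‖g (z.1 + h • z.2) - g z.1‖ ≤ M * (h * (1 + ‖z‖)) := by
    refine (hg.norm_sub_le _ _).trans ?_
    rw [add_sub_cancel_left, norm_smul, Real.norm_of_nonneg h0]
    gcongr
    linarith [norm_snd_le z]
  have hdiff : emStep g h γ z w - refresh η (√(2 * γ * h)) (kick g h (drift h z)) w
      = (0, (1 - γ * h - η) • z.2 - ((1 - η) * h) • g z.1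
          + (η * h) • (g (z.1 + h • z.2) - g z.1)) := by
    simp only [emStep, refresh, kick, drift, Prod.mk_sub_mk, sub_self, Prod.mk.injEq, true_and]
    module
  rw [hdiff, Prod.norm_mk, norm_zero, max_eq_right (norm_nonneg _)]
  refine (norm_add_le_of_le (norm_sub_le _ _) le_rfl).trans ?_
  simp only [norm_smul, Real.norm_eq_abs, abs_of_nonneg, hη_upper, hη0, h0, mul_nonneg, hη1]
  calc (1 - γ * h - η) * ‖z.2‖ + (1 - η) * h * ‖g z.1‖ + η * h * ‖g (z.1 + h • z.2) - g z.1‖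
      ≤ 2 * (γ * h) ^ 2 * (1 + ‖z‖) + 2 * (γ * h) * h * (M * (1 + ‖z‖))
          + 1 * h * (M * (h * (1 + ‖z‖))) := by
        gcongr
        · linarith [norm_snd_le z]
        · linarith
    _ = _ := by ring

lemma abs_energy_drift_neg_sub_energy_kick_le [CompleteSpace E] (hU : Differentiable ℝ U)
    (hg : LipschitzWith M (gradient U)) (hg0 : ‖gradient U 0‖ ≤ M) (h : ℝ) (z : E × E) :
    |-(‖(drift (-h) z).2‖ ^ 2 / 2 + U (drift (-h) z).1)
        - -(‖(kick (gradient U) h z).2‖ ^ 2 / 2 + U (kick (gradient U) h z).1)| ≤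
      h ^ 2 * (M + M ^ 2) * (1 + ‖z‖) ^ 2 := by
  have htaylor := abs_sub_sub_inner_gradient_le hU hg z.1 (-h • z.2)
  have hforce : ‖gradient U z.1‖ ≤ M * (1 + ‖z‖) :=
    (norm_le_mul_one_add_norm hg hg0 z.1).trans (by gcongr; exact norm_fst_le z)
  have hdiff : -(‖(drift (-h) z).2‖ ^ 2 / 2 + U (drift (-h) z).1)
        - -(‖(kick (gradient U) h z).2‖ ^ 2 / 2 + U (kick (gradient U) h z).1)
      = h ^ 2 * ‖gradient U z.1‖ ^ 2 / 2
        - (U (z.1 + -h • z.2) - U z.1 - inner ℝ (gradient U z.1) (-h • z.2)) := by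
    simp only [drift, kick]
    rw [norm_sub_sq_real, norm_smul, inner_smul_right, inner_smul_right, mul_pow,
      Real.norm_eq_abs, sq_abs, real_inner_comm]
    ring
  rw [hdiff]
  calc _ ≤ h ^ 2 * ‖gradient U z.1‖ ^ 2 / 2 + M * ‖-h • z.2‖ ^ 2 := by
        refine (abs_sub _ _).trans (add_le_add (abs_of_nonneg (by positivity)).le htaylor)
    _ ≤ h ^ 2 * (M * (1 + ‖z‖)) ^ 2 / 1 + M * (h ^ 2 * (1 + ‖z‖) ^ 2) := by
        rw [norm_smul, mul_pow, norm_neg, Real.norm_eq_abs, sq_abs]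
        gcongr
        · norm_num
        · linarith [norm_snd_le z]
    _ = _ := by ring

lemma abs_sub_mul_abs_energy_sub_le [CompleteSpace E] (hU : Differentiable ℝ U)
    (hg : LipschitzWith M (gradient U)) (hg0 : ‖gradient U 0‖ ≤ M) (h0 : 0 ≤ h)
    (hMh : 2 * (M * h) ≤ 1) {G : E × E → ℝ} {L : ℝ≥0} (hG : LipschitzWith L G) (z : E × E) :
    |G (kick (gradient U) h z) - G 0| * |-(‖(drift (-h) z).2‖ ^ 2 / 2 + U (drift (-h) z).1)
        - -(‖(kick (gradient U) h z).2‖ ^ 2 / 2 + U (kick (gradient U) h z).1)| ≤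
      2 * L * (h ^ 2 * (M + M ^ 2)) * (1 + ‖z‖) ^ 3 := by
  have hkick := norm_kick_sub_le hg hg0 h0 hMh z
  have hG_le : |G (kick (gradient U) h z) - G 0| ≤ L * (2 * (1 + ‖z‖)) := by
    refine (hG.norm_sub_le _ _).trans ?_
    rw [sub_zero]
    gcongr
    linarith [norm_le_norm_add_norm_sub z (kick (gradient U) h z),
      norm_sub_rev z (kick (gradient U) h z), norm_nonneg z]
  calc _ ≤ L * (2 * (1 + ‖z‖)) * (h ^ 2 * (M + M ^ 2) * (1 + ‖z‖) ^ 2) := by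
        gcongr
        exact abs_energy_drift_neg_sub_energy_kick_le hU hg hg0 h z
    _ = _ := by ring

end InnerProductSpace

section AlmostInvariance

variable {E : Type*} [NormedAddCommGroup E] [InnerProductSpace ℝ E] [FiniteDimensional ℝ E]
  [MeasurableSpace E] [BorelSpace E]

lemma measurePreserving_kick {g : E → E} (hg : Measurable g) (h : ℝ) :
    MeasurePreserving (kick g h) := by
  exact (MeasurePreserving.id volume).skew_product (g := fun x v => v - h • g x) (by fun_prop)
    (ae_of_all _ fun x => (measurePreserving_sub_right volume (h • g x)).map_eq)

lemma measurePreserving_drift (h : ℝ) : MeasurePreserving (drift (E := E) h) := by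
  have hshear : MeasurePreserving fun z : E × E => (z.1, z.2 + h • z.1) :=
    (MeasurePreserving.id volume).skew_product (g := fun v x => x + h • v) (by fun_prop)
      (ae_of_all _ fun v => (measurePreserving_add_right volume (h • v)).map_eq)
  exact Measure.measurePreserving_swap.comp (hshear.comp Measure.measurePreserving_swap)

variable {U : E → ℝ} {G F : E × E → ℝ} {L M : ℝ≥0} {a b h γ : ℝ}

lemma integrable_comp_add_smul_stdGaussian (hF : LipschitzWith L F) (x v : E) (σ : ℝ) :
    Integrable (fun w => F (x, v + σ • w)) (stdGaussian E) := by
  have hdist : Integrable (dist 0) (stdGaussian E) :=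
    IsGaussian.integrable_id.norm.congr (ae_of_all _ fun w => (dist_zero_left w).symm)
  have hnoise := (lipschitzWith_smul σ).comp (LipschitzWith.id (α := E))
  exact integrable_of_lipschitzWith (hF.comp
    ((LipschitzWith.const x).prodMk ((LipschitzWith.const v).add hnoise))) hdist

lemma lipschitzWith_markovOp_refresh {η σ : ℝ} (hη0 : 0 ≤ η) (hη1 : η ≤ 1)
    (hF : LipschitzWith L F) :
    LipschitzWith L (markovOp (refresh η σ) (stdGaussian E) F) := by
  have hrefresh (w : E) : LipschitzWith 1 (refresh η σ · w) := by
    refine LipschitzWith.of_dist_le_mul fun z z' => ?_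
    rw [NNReal.coe_one, one_mul]
    refine max_le_max le_rfl ?_
    rw [refresh, refresh, dist_add_right, dist_smul₀, Real.norm_of_nonneg hη0]
    exact mul_le_of_le_one_left dist_nonneg hη1
  exact (lipschitzWith_markovOp hrefresh
    (fun _ => integrable_comp_add_smul_stdGaussian hF _ _ _) hF).weaken (mul_one L).le

section Confining

variable (hU : Differentiable ℝ U) (hg : LipschitzWith M (gradient U)) (hg0 : ‖gradient U 0‖ ≤ M)
  (hb : 0 < b) (hUb : ∀ x, b * ‖x‖ ^ 2 - a ≤ U x) (h0 : 0 ≤ h) (h1 : h ≤ 1)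
  (hMh : 2 * (M * h) ≤ 1)
include hU hg hg0 hb hUb h0 h1 hMh

lemma abs_integral_kick_drift_sub_le (hG : LipschitzWith L G) :
    |∫ z, G (kick (gradient U) h (drift h z)) ∂boltzmann U - ∫ z, G z ∂boltzmann U| ≤
      L * (h ^ 2 * (32 * (M + M ^ 2)) * ∫ z, (1 + ‖z‖) ^ 3 ∂boltzmann U) := by
  have hUm := hU.continuous.measurable
  have := isProbabilityMeasure_boltzmann hUm hb hUb
  have hdist := integrable_dist_zero_boltzmann hUm hb hUb
  obtain ⟨c, hc⟩ := exists_lipschitzWith_kick_drift hg h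
  have hG_int := integrable_of_lipschitzWith hG hdist
  have hGc_int : Integrable (fun z => G (kick (gradient U) h (drift h z))) (boltzmann U) :=
    integrable_of_lipschitzWith (hG.comp hc) hdist
  have hdrift (y : E × E) : 1 + ‖y‖ ≤ 2 * (1 + ‖drift (-h) y‖) := by
    have hle := norm_drift_le h0 h1 (drift (-h) y)
    rw [drift_drift_neg] at hle
    linarith
  have hkick (y : E × E) : 1 + ‖y‖ ≤ 2 * (1 + ‖kick (gradient U) h y‖) := by
    linarith [norm_kick_sub_le hg hg0 h0 hMh y, norm_sub_rev y (kick (gradient U) h y),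
      norm_le_norm_add_norm_sub (kick (gradient U) h y) y]
  have hΘ {y z : E × E} (hyz : 1 + ‖y‖ ≤ 2 * (1 + ‖z‖)) :
      2 * L * (h ^ 2 * (M + M ^ 2)) * (1 + ‖y‖) ^ 3 ≤
        L * (h ^ 2 * (16 * (M + M ^ 2))) * (1 + ‖z‖) ^ 3 :=
    calc 2 * L * (h ^ 2 * (M + M ^ 2)) * (1 + ‖y‖) ^ 3
        ≤ 2 * L * (h ^ 2 * (M + M ^ 2)) * (2 * (1 + ‖z‖)) ^ 3 := by gcongr
      _ = _ := by ring
  have hbound := abs_integral_tilted_comp_sub_le (Ψ := fun z => kick (gradient U) h (drift h z))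
    (G := fun z => G z - G 0) (Θ := fun z => L * (h ^ 2 * (16 * (M + M ^ 2))) * (1 + ‖z‖) ^ 3)
    (integrable_exp_neg_energy hUm hb hUb) (measurePreserving_drift (-h))
    (measurePreserving_kick hg.continuous.measurable h) (fun y => by rw [drift_drift_neg])
    (hGc_int.sub (integrable_const _)) (hG_int.sub (integrable_const _))
    ((integrable_one_add_norm_pow_boltzmann hUm hb hUb 3).const_mul _)
    (fun y => (abs_sub_mul_abs_energy_sub_le hU hg hg0 h0 hMh hG y).trans (hΘ (hdrift y)))
    (fun y => (abs_sub_mul_abs_energy_sub_le hU hg hg0 h0 hMh hG y).trans (hΘ (hkick y)))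
  rw [← boltzmann, integral_sub hGc_int (integrable_const _),
    integral_sub hG_int (integrable_const _), sub_sub_sub_cancel_right, integral_const_mul]
    at hbound
  exact hbound.trans_eq (by ring)

lemma isAlmostInvariant_emStep (hγ : 0 ≤ γ) (hγh : 2 * (γ * h) ≤ 1) :
    IsAlmostInvariant (emStep (gradient U) h γ) (stdGaussian E)
      (h ^ 2 * ((2 * γ ^ 2 + 2 * γ * M + M + 32 * (M + M ^ 2)) *
        ∫ z, (1 + ‖z‖) ^ 3 ∂boltzmann U)).toNNReal (boltzmann U) := by
  intro L F hF
  have hUm := hU.continuous.measurable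
  have := isProbabilityMeasure_boltzmann hUm hb hUb
  have hdist := integrable_dist_zero_boltzmann hUm hb hUb
  have hmoment := integrable_one_add_norm_pow_boltzmann hUm hb hUb 3
  set P := markovOp (emStep (gradient U) h γ) (stdGaussian E) F
  set Q := markovOp (refresh (√(1 - 2 * γ * h)) (√(2 * γ * h))) (stdGaussian E) F
  have hQ : LipschitzWith L Q := lipschitzWith_markovOp_refresh (Real.sqrt_nonneg _)
    (Real.sqrt_le_one.2 (by nlinarith)) hF
  obtain ⟨c, hc⟩ := exists_lipschitzWith_kick_drift hg h
  obtain ⟨c', hc'⟩ := exists_lipschitzWith_emStep hg h γ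
  have hP_int : Integrable P (boltzmann U) := integrable_of_lipschitzWith
    (lipschitzWith_markovOp hc' (fun _ => integrable_comp_add_smul_stdGaussian hF _ _ _) hF) hdist
  have hQ_int : Integrable (fun z => Q (kick (gradient U) h (drift h z))) (boltzmann U) :=
    integrable_of_lipschitzWith (hQ.comp hc) hdist
  have hQ_integral : ∫ z, Q z ∂boltzmann U = ∫ z, F z ∂boltzmann U :=
    integral_velocity_rotation_boltzmann hUm
      (by rw [Real.sq_sqrt, Real.sq_sqrt] <;> nlinarith) (integrable_of_lipschitzWith hF hdist)
  have hstep : |∫ z, (P z - Q (kick (gradient U) h (drift h z))) ∂boltzmann U| ≤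
      ∫ z, L * (h ^ 2 * (2 * γ ^ 2 + 2 * γ * M + M)) * (1 + ‖z‖) ^ 3 ∂boltzmann U := by
    rw [← Real.norm_eq_abs]
    refine norm_integral_le_of_norm_le (hmoment.const_mul _) (ae_of_all _ fun z => ?_)
    refine (abs_markovOp_sub_le (integrable_comp_add_smul_stdGaussian hF _ _ _)
      (integrable_comp_add_smul_stdGaussian hF _ _ _) hF fun w => (dist_eq_norm _ _).trans_le
      (norm_emStep_sub_refresh_kick_drift_le hg hg0 h0 hγ hγh z w)).trans ?_
    rw [← mul_assoc]
    gcongr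
    exact le_self_pow₀ (by linarith [norm_nonneg z]) three_ne_zero
  have hsplit := abs_integral_kick_drift_sub_le hU hg hg0 hb hUb h0 h1 hMh hQ
  rw [hQ_integral] at hsplit
  rw [integral_sub hP_int hQ_int, integral_const_mul] at hstep
  rw [Real.coe_toNNReal _ (by positivity)]
  refine (abs_sub_le _ _ _).trans ((add_le_add hstep hsplit).trans_eq (by ring))

end Confining

end AlmostInvariance

end Splitting

section Moments

lemma one_le_lintegral_enorm_one_add_norm_sq {S Ω : Type*} [SeminormedAddCommGroup S]
    [MeasurableSpace Ω] (Z : Ω → S) (P : Measure Ω) [IsProbabilityMeasure P] :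
    1 ≤ ∫⁻ ω, ‖1 + ‖Z ω‖‖ₑ ^ 2 ∂P := by
  refine (by simp : (1 : ℝ≥0∞) ≤ ∫⁻ _, 1 ∂P).trans (lintegral_mono fun ω => one_le_pow₀ ?_)
  rw [← enorm_one (G := ℝ), enorm_le_iff_norm_le, norm_one, Real.norm_of_nonneg (by positivity)]
  linarith [norm_nonneg (Z ω)]

lemma error_rates_le {h κ N : ℝ≥0} (hh : h ≠ 0) (hκ : κ ≠ 0) (hN : N ≠ 0) (a s ε : ℝ≥0) :
    2 / (N * (h * κ)) * a ^ 2 + (2 * (h ^ 2 * ε / (h * κ)) ^ 2 + h * s / (N * (h * κ) ^ 2)) ≤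
      (2 * a ^ 2 / κ + 2 * (ε / κ) ^ 2 + s / κ ^ 2) * (h ^ 2 + 1 / (N * h)) := by
  calc _ = (2 * a ^ 2 / κ + s / κ ^ 2) * (1 / (N * h)) + 2 * (ε / κ) ^ 2 * h ^ 2 := by
        field_simp
        ring
    _ ≤ (2 * a ^ 2 / κ + s / κ ^ 2) * (h ^ 2 + 1 / (N * h))
        + 2 * (ε / κ) ^ 2 * (h ^ 2 + 1 / (N * h)) := by
        gcongr
        exacts [le_add_self, le_self_add]
    _ = _ := by ring

variable {S S' : Type*} [NormedAddCommGroup S] [NormedSpace ℝ S]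
  [NormedAddCommGroup S'] [NormedSpace ℝ S'] [MeasurableSpace S]

lemma lintegral_sq_lintegral_edist_map_le {Ω : Type*} [MeasurableSpace Ω] {π : Measure S} {M : ℝ≥0}
    (T : S →L[ℝ] S') (Z : Ω → S) (P : Measure Ω) (hM : ∫⁻ z, ‖1 + ‖z‖‖ₑ ∂π ≤ M) :
    ∫⁻ ω, (∫⁻ z, edist (T (Z ω)) (T z) ∂π) ^ 2 ∂P ≤
      ((‖T‖₊ * M) ^ 2 : ℝ≥0) * ∫⁻ ω, ‖1 + ‖Z ω‖‖ₑ ^ 2 ∂P := by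
  have hdist (z₀ z : S) : edist (T z₀) (T z) ≤ ‖T‖₊ * (‖1 + ‖z₀‖‖ₑ * ‖1 + ‖z‖‖ₑ) := by
    refine (T.lipschitz z₀ z).trans (mul_le_mul_right ?_ _)
    rw [← enorm_mul, edist_eq_enorm_sub, enorm_le_iff_norm_le, Real.norm_of_nonneg (by positivity)]
    nlinarith [norm_sub_le z₀ z, norm_nonneg z₀, norm_nonneg z]
  rw [← lintegral_const_mul' _ _ ENNReal.coe_ne_top]
  refine lintegral_mono fun ω => ?_
  calc (∫⁻ z, edist (T (Z ω)) (T z) ∂π) ^ 2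
      ≤ (∫⁻ z, ‖T‖₊ * (‖1 + ‖Z ω‖‖ₑ * ‖1 + ‖z‖‖ₑ) ∂π) ^ 2 := by
        gcongr
        exact hdist _ _
    _ = (‖T‖₊ * (‖1 + ‖Z ω‖‖ₑ * ∫⁻ z, ‖1 + ‖z‖‖ₑ ∂π)) ^ 2 := by
        rw [lintegral_const_mul' _ _ (by finiteness), lintegral_const_mul' _ _ (by finiteness)]
    _ ≤ (‖T‖₊ * (‖1 + ‖Z ω‖‖ₑ * M)) ^ 2 := by gcongr
    _ = _ := by
        push_cast
        ring

end Moments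

section EquivalentNorm

variable {S S' W Ω : Type*} [NormedAddCommGroup S] [NormedSpace ℝ S] [MeasurableSpace S]
  [BorelSpace S] [NormedAddCommGroup S'] [NormedSpace ℝ S'] [MeasurableSpace S'] [BorelSpace S']
  [MeasurableSpace W] {φ : S → W → S} {ψ : S' → W → S'} {ν : Measure W} {π : Measure S}
  {κ s ε L : ℝ≥0} {f : S → ℝ} {T : S ≃L[ℝ] S'}

lemma IsAlmostInvariant.map (hπ : IsAlmostInvariant φ ν ε π)
    (hψ : ∀ z w, T (φ z w) = ψ (T z) w) :
    IsAlmostInvariant ψ ν (‖(T : S →L[ℝ] S')‖₊ * ε) (π.map T) := by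
  intro L F hF
  have hT : MeasurableEmbedding T := T.toHomeomorph.measurableEmbedding
  have hF' := hπ (hF.comp T.toContinuousLinearMap.lipschitz)
  have hmarkov : ∫ y, markovOp ψ ν F y ∂π.map T = ∫ z, markovOp φ ν (F ∘ T) z ∂π :=
    (hT.integral_map _).trans (by simp [markovOp, hψ])
  rw [hmarkov, show ∫ y, F y ∂π.map T = ∫ z, (F ∘ T) z ∂π from hT.integral_map _]
  exact hF'.trans_eq (by push_cast; ring)

theorem IsRandomIteration.lintegral_enorm_average_sub_sq_le_of_equiv [IsProbabilityMeasure ν]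
    [mΩ : MeasurableSpace Ω] {ℱ : Filtration ℕ mΩ} {Z : ℕ → Ω → S} {ξ : ℕ → Ω → W}
    {P : Measure Ω} [IsProbabilityMeasure P] [IsProbabilityMeasure π]
    (hZ : IsRandomIteration φ ν ℱ Z ξ P) (hψ : ∀ z w, T (φ z w) = ψ (T z) w)
    (hψ_contr : IsContractiveIteration ψ ν κ s) (hπ : Integrable (dist 0) π)
    (hinv : IsAlmostInvariant φ ν ε π) (hf : LipschitzWith L f) {N : ℕ} (hN : 1 ≤ N) :
    ∫⁻ ω, ‖(N : ℝ)⁻¹ * ∑ n ∈ Finset.range N, f (Z n ω) - ∫ z, f z ∂π‖ₑ ^ 2 ∂P ≤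
      ((L * ‖(T.symm : S' →L[ℝ] S)‖₊) ^ 2 : ℝ≥0) *
        ((2 / (N * κ) : ℝ≥0) * ∫⁻ ω, (∫⁻ z, edist (T (Z 0 ω)) (T z) ∂π) ^ 2 ∂P
          + (2 * (‖(T : S →L[ℝ] S')‖₊ * ε / κ) ^ 2 + s / (N * κ ^ 2) : ℝ≥0)) := by
  have hT : MeasurableEmbedding T := T.toHomeomorph.measurableEmbedding
  have : IsProbabilityMeasure (π.map T) :=
    Measure.isProbabilityMeasure_map hT.measurable.aemeasurable
  have hdist (y : S') : Integrable (dist y) (π.map T) := hT.integrable_map_iff.2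
    (integrable_of_lipschitzWith ((LipschitzWith.dist_right y).comp
      T.toContinuousLinearMap.lipschitz) hπ)
  have hbound := (hZ.comp hT.measurable hψ).lintegral_enorm_average_sub_sq_le hψ_contr hdist
    (hinv.map hψ) (hf.comp T.symm.toContinuousLinearMap.lipschitz) hN
  have hmean : ∫ y, f (T.symm y) ∂π.map T = ∫ z, f z ∂π :=
    (hT.integral_map _).trans (by simp)
  have hedist (y : S') : ∫⁻ y', edist y y' ∂π.map T = ∫⁻ z, edist y (T z) ∂π :=
    hT.lintegral_map _
  rw [ENNReal.coe_pow]
  simpa only [Function.comp_apply, ContinuousLinearEquiv.coe_coe,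
    ContinuousLinearEquiv.symm_apply_apply, hmean, hedist] using hbound

theorem IsRandomIteration.lintegral_enorm_average_sub_sq_le_of_rates {h κ₀ s₀ ε₀ M : ℝ≥0}
    [IsProbabilityMeasure ν] [mΩ : MeasurableSpace Ω] {ℱ : Filtration ℕ mΩ} {Z : ℕ → Ω → S}
    {ξ : ℕ → Ω → W} {P : Measure Ω} [IsProbabilityMeasure P] [IsProbabilityMeasure π]
    (hZ : IsRandomIteration φ ν ℱ Z ξ P) (hψ : ∀ z w, T (φ z w) = ψ (T z) w)
    (hψ_contr : IsContractiveIteration ψ ν (h * κ₀) (h * s₀)) (hπ : Integrable (dist 0) π)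
    (hM : ∫⁻ z, ‖1 + ‖z‖‖ₑ ∂π ≤ M) (hinv : IsAlmostInvariant φ ν (h ^ 2 * ε₀) π)
    (hf : LipschitzWith L f) {N : ℕ} (hN : 1 ≤ N) :
    ∫⁻ ω, ‖(N : ℝ)⁻¹ * ∑ n ∈ Finset.range N, f (Z n ω) - ∫ z, f z ∂π‖ₑ ^ 2 ∂P ≤
      ((L * ‖(T.symm : S' →L[ℝ] S)‖₊) ^ 2 * (2 * (‖(T : S →L[ℝ] S')‖₊ * M) ^ 2 / κ₀ +
        2 * (‖(T : S →L[ℝ] S')‖₊ * ε₀ / κ₀) ^ 2 + s₀ / κ₀ ^ 2) *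
          (h ^ 2 + 1 / (N * h)) : ℝ≥0) * ∫⁻ ω, ‖1 + ‖Z 0 ω‖‖ₑ ^ 2 ∂P := by
  have hh : h ≠ 0 := left_ne_zero_of_mul hψ_contr.pos.ne'
  have hκ₀ : κ₀ ≠ 0 := right_ne_zero_of_mul hψ_contr.pos.ne'
  have hinit := lintegral_sq_lintegral_edist_map_le (T : S →L[ℝ] S') (Z 0) P hM
  have hI := one_le_lintegral_enorm_one_add_norm_sq (Z 0) P
  set c := ‖(T : S →L[ℝ] S')‖₊
  set I := ∫⁻ ω, ‖1 + ‖Z 0 ω‖‖ₑ ^ 2 ∂P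
  have hrates := error_rates_le hh hκ₀ (by positivity : (N : ℝ≥0) ≠ 0) (c * M) s₀ (c * ε₀)
  refine (hZ.lintegral_enorm_average_sub_sq_le_of_equiv hψ hψ_contr hπ hinv hf hN).trans ?_
  rw [mul_assoc ((L * _) ^ 2), ENNReal.coe_mul ((L * _) ^ 2), mul_assoc]
  refine mul_le_mul_right ?_ _
  rw [mul_left_comm c]
  calc _ ≤ (2 / (N * (h * κ₀)) : ℝ≥0) * (((c * M) ^ 2 : ℝ≥0) * I) +
        (2 * (h ^ 2 * (c * ε₀) / (h * κ₀)) ^ 2 + h * s₀ / (N * (h * κ₀) ^ 2) : ℝ≥0) * I := by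
        gcongr
        exacts [hinit, le_mul_of_one_le_right' hI]
    _ ≤ _ := by
        rw [← mul_assoc, ← ENNReal.coe_mul, ← add_mul, ← ENNReal.coe_add]
        gcongr

end EquivalentNorm

section EulerMaruyama

variable {E : Type*} [NormedAddCommGroup E] [InnerProductSpace ℝ E] [FiniteDimensional ℝ E]
  [MeasurableSpace E] [BorelSpace E] {U : E → ℝ} {f : E × E → ℝ} {K L : ℝ≥0} {m γ : ℝ}

lemma toNNReal_coe_mul (a : ℝ≥0) (x : ℝ) : (a * x).toNNReal = a * x.toNNReal := by
  rw [Real.toNNReal_mul a.coe_nonneg, Real.toNNReal_coe]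

variable (E) in
lemma lintegral_enorm_sq_stdGaussian_lt_top : ∫⁻ w, ‖w‖ₑ ^ 2 ∂stdGaussian E < ∞ := by
  have h := (IsGaussian.memLp_two_id (μ := stdGaussian E)).eLpNorm_lt_top
  rw [eLpNorm_lt_top_iff_lintegral_rpow_enorm_lt_top two_ne_zero ENNReal.ofNat_ne_top] at h
  simpa using h

lemma damping_bounds {K : ℝ} (hm : 0 < m) (hK : 0 ≤ K) (hγ : 2 * √m + 2 * K / √m ≤ γ) :
    0 < γ ∧ 4 * m ≤ γ ^ 2 ∧ 4 * K ^ 2 ≤ m * γ ^ 2 := by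
  have hsqrt : 0 < √m := Real.sqrt_pos.2 hm
  have hK' : 0 ≤ 2 * K / √m := by positivity
  have hmγ : 2 * √m ≤ γ := by linarith
  have hKγ : 2 * K ≤ √m * γ := (div_le_iff₀' hsqrt).1 (by linarith)
  refine ⟨by linarith, ?_, ?_⟩
  · calc 4 * m = (2 * √m) ^ 2 := by rw [mul_pow, Real.sq_sqrt hm.le]; ring
      _ ≤ γ ^ 2 := by gcongr
  · calc 4 * K ^ 2 = (2 * K) ^ 2 := by ring
      _ ≤ (√m * γ) ^ 2 := by gcongr
      _ = m * γ ^ 2 := by rw [mul_pow, Real.sq_sqrt hm.le]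

theorem exists_lintegral_enorm_average_emStep_sub_sq_le (hU : Differentiable ℝ U)
    (hg : LipschitzWith K (gradient U)) (hm : 0 < m) (hmono : IsStronglyMonotone m (gradient U))
    (hf : LipschitzWith L f) (hγ : 0 < γ) (hmγ : 4 * m ≤ γ ^ 2) (hKγ : 4 * K ^ 2 ≤ m * γ ^ 2) :
    ∃ C : ℝ≥0, ∃ h₀ > (0 : ℝ), ∀ h : ℝ≥0, 0 < h → h ≤ h₀ →
      ∀ {Ω : Type*} [mΩ : MeasurableSpace Ω] {P : Measure Ω} [IsProbabilityMeasure P]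
        {ℱ : Filtration ℕ mΩ} {Z : ℕ → Ω → E × E} {ξ : ℕ → Ω → E},
        IsRandomIteration (emStep (gradient U) h γ) (stdGaussian E) ℱ Z ξ P → ∀ N : ℕ, 1 ≤ N →
        ∫⁻ ω, ‖(N : ℝ)⁻¹ * ∑ n ∈ Finset.range N, f (Z n ω) - ∫ z, f z ∂boltzmann U‖ₑ ^ 2 ∂P ≤
          (C * (h ^ 2 + 1 / (N * h)) : ℝ≥0) * ∫⁻ ω, ‖1 + ‖Z 0 ω‖‖ₑ ^ 2 ∂P := by
  obtain ⟨a, hUb⟩ := hmono.exists_quadratic_sub_le hU hm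
  have hb : 0 < m / 4 := by positivity
  have hUm := hU.continuous.measurable
  have := isProbabilityMeasure_boltzmann hUm hb hUb
  set M : ℝ≥0 := ‖gradient U 0‖₊ + K
  have hg' : LipschitzWith M (gradient U) := hg.weaken le_add_self
  have hg0 : ‖gradient U 0‖ ≤ M := le_add_of_nonneg_right K.2
  obtain ⟨M₁, hM₁⟩ := WithTop.ne_top_iff_exists.1 <| ne_of_lt <| hasFiniteIntegral_iff_enorm.1
    (by simpa using (integrable_one_add_norm_pow_boltzmann hUm hb hUb 1).2)
  obtain ⟨M₂, hM₂⟩ := WithTop.ne_top_iff_exists.1 (lintegral_enorm_sq_stdGaussian_lt_top E).ne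
  refine ⟨?C, (1 + 3 * γ + 2 * M)⁻¹, by positivity, fun h h0 hh Ω _ P _ ℱ Z ξ hZ N hN => ?bound⟩
  case bound =>
    have h0' : (0 : ℝ) < h := h0
    have hh' : h * (1 + 3 * γ + 2 * M) ≤ 1 :=
      (le_div_iff₀ (by positivity)).1 (hh.trans_eq (one_div _).symm)
    have hγh : 0 < γ * h := by positivity
    have hMh : 0 ≤ M * (h : ℝ) := by positivity
    have hcontr := isContractiveIteration_twistedStep hM₂.ge hγ hm hmγ hKγ h0' (by linarith) hg
      hmono
    have hinv := isAlmostInvariant_emStep hU hg' hg0 hb hUb h0'.le (by linarith) (by linarith) hγ.le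
      (by linarith)
    rw [mul_comm m, mul_div_assoc, toNNReal_coe_mul, mul_comm 8, mul_div_assoc, toNNReal_coe_mul,
      mul_assoc] at hcontr
    rw [← NNReal.coe_pow, toNNReal_coe_mul] at hinv
    exact hZ.lintegral_enorm_average_sub_sq_le_of_rates
      (fun z w => (twistedStep_twistedCoords hγ z w).symm) hcontr
      (integrable_dist_zero_boltzmann hUm hb hUb) hM₁.ge hinv hf hN

theorem statement13_general (hU : Differentiable ℝ U) (hg : LipschitzWith K (gradient U))
    (hm : 0 < m) (hmono : IsStronglyMonotone m (gradient U)) (hf : LipschitzWith L f) :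
    ∃ γ₀ > (0 : ℝ), ∀ γ ≥ γ₀, ∃ C > (0 : ℝ), ∃ h₀ > (0 : ℝ), ∀ h : ℝ, 0 < h → h ≤ h₀ →
      ∀ {Ω : Type*} [MeasurableSpace Ω] {P : Measure Ω} [IsProbabilityMeasure P]
        {X V ξ : ℕ → Ω → E}, Measurable (X 0) → Measurable (V 0) → (∀ n, Measurable (ξ n)) →
        (∀ n, P.map (ξ n) = stdGaussian E) →
        iIndep (fun i : Option ℕ =>
          i.elim (MeasurableSpace.comap (fun ω => (X 0 ω, V 0 ω)) inferInstance)
            fun n => MeasurableSpace.comap (ξ n) inferInstance) P →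
        (∀ n ω, X (n + 1) ω = X n ω + h • V n ω) →
        (∀ n ω, V (n + 1) ω = V n ω - h • gradient U (X n ω) - (γ * h) • V n ω
          + √(2 * γ * h) • ξ n ω) →
        ∀ N : ℕ, 1 ≤ N →
          ∫⁻ ω, ENNReal.ofReal (((N : ℝ)⁻¹ * (∑ n ∈ Finset.range N, f (X n ω, V n ω))
              - ∫ z, f z ∂boltzmann U) ^ 2) ∂P ≤
            ENNReal.ofReal (C * (h ^ 2 + 1 / (N * h))) *
              ∫⁻ ω, ENNReal.ofReal ((‖X 0 ω‖ + ‖V 0 ω‖ + 1) ^ 2) ∂P := by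
  refine ⟨2 * √m + 2 * K / √m, by positivity, fun γ hγ => ?_⟩
  obtain ⟨hγ0, hmγ, hKγ⟩ := damping_bounds hm K.2 hγ
  obtain ⟨C, h₀, hh₀, hC⟩ :=
    exists_lintegral_enorm_average_emStep_sub_sq_le hU hg hm hmono hf hγ0 hmγ hKγ
  refine ⟨C + 1, by positivity, h₀, hh₀, fun h h0 hh Ω _ P _ X V ξ hX hV hξ hlaw hindep hXstep
    hVstep N hN => ?_⟩
  lift h to ℝ≥0 using h0.le
  obtain ⟨ℱ, hZ⟩ := IsRandomIteration.of_iIndep (Z := fun n ω => (X n ω, V n ω))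
    (continuous_emStep hg.continuous h γ).measurable (hX.prodMk hV) hξ hlaw hindep
    fun n ω => Prod.ext (hXstep n ω) (hVstep n ω)
  have hsq (x : ℝ) : ENNReal.ofReal (x ^ 2) = ‖x‖ₑ ^ 2 := by
    rw [← sq_abs, ENNReal.ofReal_pow (abs_nonneg x), Real.enorm_eq_ofReal_abs]
  have hconst : ENNReal.ofReal ((C + 1) * (h ^ 2 + 1 / (N * h))) =
      ((C + 1) * (h ^ 2 + 1 / (N * h)) : ℝ≥0) := by
    rw [← ENNReal.ofReal_coe_nnreal]
    push_cast
    rfl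
  have hinit (ω : Ω) : 1 + ‖(X 0 ω, V 0 ω)‖ ≤ ‖X 0 ω‖ + ‖V 0 ω‖ + 1 := by
    linarith [Prod.norm_mk (X 0 ω) (V 0 ω),
      max_le_add_of_nonneg (norm_nonneg (X 0 ω)) (norm_nonneg (V 0 ω))]
  simp only [hsq, hconst]
  refine (hC h (mod_cast h0) hh hZ N hN).trans ?_
  gcongr with ω
  · exact le_self_add
  · rw [enorm_le_iff_norm_le, Real.norm_of_nonneg (by positivity),
      Real.norm_of_nonneg (by positivity)]
    exact hinit ω

end EulerMaruyama

section Euclidean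

variable {d : ℕ}

lemma map_eq_stdGaussian {Ω : Type*} [MeasurableSpace Ω] {P : Measure Ω}
    {ξ : Ω → EuclideanSpace ℝ (Fin d)} (hξ : Measurable ξ)
    (hlaw : P.map (fun ω i => ξ ω i) = Measure.pi fun _ => gaussianReal 0 1) :
    P.map ξ = stdGaussian (EuclideanSpace ℝ (Fin d)) := by
  rw [← map_pi_eq_stdGaussian, ← hlaw, Measure.map_map (by fun_prop) (by fun_prop)]
  rfl

end Euclidean

/-- statistical error of the Euler–Maruyama integrator under global strong
convexity (strong order `p = 1, q = 1`), under A1, A2', A3: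
`E[e²(N,h)] ≤ C(h² + 1/(Nh))·E(|X₀|+|V₀|+1)⁴`, where `π` is the Boltzmann measure with
density proportional to `exp(−|v|²/2 − U(x))`. -/
theorem statement13 (d : ℕ) (hd : 1 ≤ d) (U : EuclideanSpace ℝ (Fin d) → ℝ)
    (f : EuclideanSpace ℝ (Fin d) × EuclideanSpace ℝ (Fin d) → ℝ)
    (C₁ m C₂ : ℝ) (hC₁ : 0 < C₁) (hm : 0 < m) (hC₂ : 0 < C₂)
    -- A1
    (hU : ContDiff ℝ 3 U)
    (hU0 : ∀ x, |U x| ≤ C₁ * (‖x‖ + 1) ^ 2)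
    (hU1 : ∀ x, ‖gradient U x‖ ≤ C₁ * (‖x‖ + 1))
    (hU2 : ∀ x, ‖iteratedFDeriv ℝ 2 U x‖ ≤ C₁)
    (hU3 : ∀ x, ‖iteratedFDeriv ℝ 3 U x‖ ≤ C₁)
    -- A2'
    (hconv : ∀ x y, m * ‖y‖ ^ 2 ≤ iteratedFDeriv ℝ 2 U x ![y, y])
    -- A3
    (hf : ContDiff ℝ 3 f)
    (hf1 : ∀ z, ‖iteratedFDeriv ℝ 1 f z‖ ≤ C₂)
    (hf2 : ∀ z, ‖iteratedFDeriv ℝ 2 f z‖ ≤ C₂)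
    (hf3 : ∀ z, ‖iteratedFDeriv ℝ 3 f z‖ ≤ C₂)
    -- the ensemble average π(f) of f under the Boltzmann distribution
    (πf : ℝ)
    (hπf : πf = (∫ z : EuclideanSpace ℝ (Fin d) × EuclideanSpace ℝ (Fin d),
          f z * Real.exp (-(‖z.2‖ ^ 2 / 2 + U z.1))) /
        (∫ z : EuclideanSpace ℝ (Fin d) × EuclideanSpace ℝ (Fin d),
          Real.exp (-(‖z.2‖ ^ 2 / 2 + U z.1)))) :
    ∃ γ₀ > (0 : ℝ), ∀ γ ≥ γ₀, ∃ C > (0 : ℝ), ∃ h₀ > (0 : ℝ), ∀ h : ℝ, 0 < h → h ≤ h₀ →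
      ∀ (Ω : Type) (_ : MeasurableSpace Ω) (P : Measure Ω), IsProbabilityMeasure P →
      ∀ X V ξ : ℕ → Ω → EuclideanSpace ℝ (Fin d),
        Measurable (X 0) → Measurable (V 0) →
        (∀ n, Measurable (ξ n)) →
        -- each ξ_n is a standard Gaussian random vector in ℝ^d
        (∀ n, Measure.map (fun ω i => ξ n ω i) P =
          Measure.pi fun _ : Fin d => gaussianReal 0 1) →
        -- (X₀,V₀), ξ₀, ξ₁, … are mutually independent
        iIndep (fun i : Option ℕ =>
          Option.elim i (MeasurableSpace.comap (fun ω => (X 0 ω, V 0 ω)) inferInstance)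
            fun n => MeasurableSpace.comap (ξ n) inferInstance) P →
        -- Euler–Maruyama recursion
        (∀ n ω, X (n + 1) ω = X n ω + h • V n ω) →
        (∀ n ω, V (n + 1) ω = V n ω - h • gradient U (X n ω) - (γ * h) • V n ω
            + Real.sqrt (2 * γ * h) • ξ n ω) →
        -- finite initial second moment
        (∫⁻ ω, ENNReal.ofReal ((‖X 0 ω‖ + ‖V 0 ω‖ + 1) ^ 4) ∂P) < ∞ →
        ∀ N : ℕ, 1 ≤ N →
          (∫⁻ ω, ENNReal.ofReal
              ((((N : ℝ))⁻¹ * (∑ n ∈ Finset.range N, f (X n ω, V n ω)) - πf) ^ 2) ∂P) ≤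
            ENNReal.ofReal (C * (h ^ 2 + 1 / (N * h))) *
              ∫⁻ ω, ENNReal.ofReal ((‖X 0 ω‖ + ‖V 0 ω‖ + 1) ^ 4) ∂P := by
  have hU' : ContDiff ℝ 2 U := hU.of_le (by norm_num)
  obtain ⟨γ₀, hγ₀, hbound⟩ := statement13_general (hU'.differentiable two_ne_zero)
    (lipschitzWith_gradient hU' hU2) hm (isStronglyMonotone_gradient hU' hconv)
    (lipschitzWith_of_norm_iteratedFDeriv_one_le (hf.differentiable three_ne_zero) hf1)
  refine ⟨γ₀, hγ₀, fun γ hγ => ?_⟩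
  obtain ⟨C, hC, h₀, hh₀, hbound⟩ := hbound γ hγ
  refine ⟨C, hC, h₀, hh₀, fun h h0 hh Ω _ P _ X V ξ hX hV hξ hlaw hindep hXstep hVstep _ N hN => ?_⟩
  rw [hπf, ← integral_boltzmann]
  refine (hbound h h0 hh hX hV hξ (fun n => map_eq_stdGaussian (hξ n) (hlaw n)) hindep hXstep hVstep
    N hN).trans ?_
  gcongr
  · linarith [norm_nonneg (X 0 ‹_›), norm_nonneg (V 0 ‹_›)]
  · norm_num
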